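/- arXiv:2304.00255 — 2 statements merged into one kernel-verified Lean document; each statement's English description precedes it below -/
import Mathlib

section
/- Let G be a forest. Then reg(I(G)^{[k]}) = aim(G,k) + k for all 1 ≤ k ≤ ν(G), where aim(G,k) is the k-admissible matching number. -/
open scoped Classical

noncomputable section

/-- `M` is a matching of `G`: a set of edges of `G` that are pairwise vertex-disjoint. -/
def IsMatchingSet {V : Type*} (G : SimpleGraph V) (M : Finset (Sym2 V)) : Prop :=
  (∀ e ∈ M, e ∈ G.edgeSet) ∧
    ∀ e ∈ M, ∀ f ∈ M, e ≠ f → ∀ v : V, v ∈ e → v ∉ f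

/-- The matching number `ν(G)`: the maximum size of a matching of `G`. -/
def matchingNumber {V : Type*} [Fintype V] (G : SimpleGraph V) : ℕ :=
  sSup {k | ∃ M : Finset (Sym2 V), IsMatchingSet G M ∧ M.card = k}

/-- Two edges `e, f` form a gap in `G`: they are vertex-disjoint and no edge of `G`
joins an endpoint of `e` to an endpoint of `f` (an induced matching of size 2). -/
def IsGap {V : Type*} (G : SimpleGraph V) (e f : Sym2 V) : Prop :=
  (∀ v : V, v ∈ e → v ∉ f) ∧ ∀ u v : V, u ∈ e → v ∈ f → ¬ G.Adj u v

/-- The set of vertices covered by a set of edges `M`. -/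
def matchVerts {V : Type*} (M : Finset (Sym2 V)) : Set V := {v | ∃ e ∈ M, v ∈ e}

/-- `M` is a `k`-admissible matching of `G`: a matching admitting a partition into
nonempty parts `M₁, …, M_r` such that edges from distinct parts form gaps in `G`,
`|M₁| + ⋯ + |M_r| ≤ r + k - 1`, and the induced subgraph on the vertices of each
part is a forest. -/
def IsAdmissibleMatching {V : Type*} (G : SimpleGraph V) (k : ℕ)
    (M : Finset (Sym2 V)) : Prop :=
  IsMatchingSet G M ∧
    ∃ P : Finset (Finset (Sym2 V)),
      (∀ p ∈ P, p.Nonempty) ∧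
      (∀ p ∈ P, ∀ q ∈ P, p ≠ q → Disjoint p q) ∧
      P.biUnion id = M ∧
      (∀ p ∈ P, ∀ q ∈ P, p ≠ q → ∀ e ∈ p, ∀ f ∈ q, IsGap G e f) ∧
      M.card + 1 ≤ P.card + k ∧
      ∀ p ∈ P, (SimpleGraph.induce (matchVerts p) G).IsAcyclic

/-- The `k`-admissible matching number `aim(G,k)`: the maximum size of a
`k`-admissible matching of `G` (`0` if none exists). -/
def aim {V : Type*} [Fintype V] (G : SimpleGraph V) (k : ℕ) : ℕ :=
  sSup {m | ∃ M : Finset (Sym2 V), IsAdmissibleMatching G k M ∧ M.card = m}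


open MvPolynomial

/-- The `k`-th squarefree power `I(G)^{[k]}` of the edge ideal of a graph `G` on
`Fin n`: the ideal generated by the monomials `x_{V(M)}` over all `k`-matchings `M`. -/
def edgeIdealSqPow (K : Type*) [Field K] {n : ℕ} (G : SimpleGraph (Fin n)) (k : ℕ) :
    Ideal (MvPolynomial (Fin n) K) :=
  Ideal.span {f | ∃ M : Finset (Sym2 (Fin n)), IsMatchingSet G M ∧ M.card = k ∧
    f = ∏ v ∈ Finset.univ.filter (fun v => ∃ e ∈ M, v ∈ e), X v}

/-- A graded free resolution of a homogeneous ideal `J` of `S = K[x_1,…,x_n]`: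
free modules `F i = S^{rk i}` with basis elements of degrees `deg i`, degree-preserving
differentials given on basis elements by homogeneous coordinates, an augmentation onto
a homogeneous generating set of `J`, and exactness. -/
structure GradedFreeResolution {K : Type*} [Field K] {n : ℕ}
    (J : Ideal (MvPolynomial (Fin n) K)) where
  rk : ℕ → ℕ
  deg : (i : ℕ) → Fin (rk i) → ℕ
  gen : Fin (rk 0) → MvPolynomial (Fin n) K
  gen_mem : ∀ p, gen p ∈ J
  gen_hom : ∀ p, (gen p).IsHomogeneous (deg 0 p)
  gen_span : Ideal.span (Set.range gen) = J
  d : (i : ℕ) →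
    ((Fin (rk (i + 1)) → MvPolynomial (Fin n) K) →ₗ[MvPolynomial (Fin n) K]
      (Fin (rk i) → MvPolynomial (Fin n) K))
  d_graded : ∀ (i : ℕ) (q : Fin (rk (i + 1))) (p : Fin (rk i)),
    d i (Pi.single q 1) p ≠ 0 →
      deg i p ≤ deg (i + 1) q ∧
        (d i (Pi.single q 1) p).IsHomogeneous (deg (i + 1) q - deg i p)
  aug : (Fin (rk 0) → MvPolynomial (Fin n) K) →ₗ[MvPolynomial (Fin n) K]
    MvPolynomial (Fin n) K
  aug_apply : ∀ v, aug v = ∑ p, v p * gen p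
  exact_zero : LinearMap.range (d 0) = LinearMap.ker aug
  exact_succ : ∀ i, LinearMap.range (d (i + 1)) = LinearMap.ker (d i)

/-- The Castelnuovo–Mumford regularity of a homogeneous ideal `J`: the least `r` such
that `J` admits a graded free resolution with all `i`-th syzygies generated in degrees
at most `r + i` (attained by the minimal graded free resolution). -/
def reg {K : Type*} [Field K] {n : ℕ} (J : Ideal (MvPolynomial (Fin n) K)) : ℕ :=
  sInf {r | ∃ F : GradedFreeResolution J, ∀ (i : ℕ) (p : Fin (F.rk i)), F.deg i p ≤ r + i}

namespace SqP

section graded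
variable {K : Type*} [Field K] {n : ℕ} {ι κ μ : Type}

/-- homogeneous vectors of degree `D` in a graded free module -/
def HomVec {K : Type*} [Field K] {n : ℕ} {ι : Type} (dg : ι → ℕ) (D : ℕ)
    (v : ι → MvPolynomial (Fin n) K) : Prop :=
  ∀ p, (v p).IsHomogeneous (D - dg p) ∧ (D < dg p → v p = 0)

/-- graded linear maps -/
def GrMap {K : Type*} [Field K] {n : ℕ} {ι κ : Type} (dι : ι → ℕ) (dκ : κ → ℕ)
    (f : (ι → MvPolynomial (Fin n) K) →ₗ[MvPolynomial (Fin n) K] (κ → MvPolynomial (Fin n) K)) :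
    Prop :=
  ∀ D v, HomVec dι D v → HomVec dκ D (f v)

lemma HomVec.zero (dg : ι → ℕ) (D : ℕ) :
    HomVec dg D (0 : ι → MvPolynomial (Fin n) K) :=
  fun _ => ⟨isHomogeneous_zero _ _ _, fun _ => rfl⟩

lemma HomVec.add {dg : ι → ℕ} {D : ℕ} {v w : ι → MvPolynomial (Fin n) K}
    (hv : HomVec dg D v) (hw : HomVec dg D w) : HomVec dg D (v + w) :=
  fun p => ⟨(hv p).1.add (hw p).1, fun h => by simp [(hv p).2 h, (hw p).2 h]⟩

lemma HomVec.neg {dg : ι → ℕ} {D : ℕ} {v : ι → MvPolynomial (Fin n) K}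
    (hv : HomVec dg D v) : HomVec dg D (-v) :=
  fun p => ⟨(hv p).1.neg, fun h => by simp [(hv p).2 h]⟩

lemma HomVec.sub {dg : ι → ℕ} {D : ℕ} {v w : ι → MvPolynomial (Fin n) K}
    (hv : HomVec dg D v) (hw : HomVec dg D w) : HomVec dg D (v - w) := by
  rw [sub_eq_add_neg]; exact hv.add hw.neg

lemma HomVec.sum {α : Type} {dg : ι → ℕ} {D : ℕ} (s : Finset α)
    (v : α → ι → MvPolynomial (Fin n) K)
    (hv : ∀ a ∈ s, HomVec dg D (v a)) : HomVec dg D (∑ a ∈ s, v a) := by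
  induction s using Finset.induction_on with
  | empty => simpa using HomVec.zero dg D
  | insert a s ha ih =>
    rw [Finset.sum_insert ha]
    exact (hv a (by simp)).add (ih fun b hb => hv b (by simp [hb]))

lemma HomVec.smul {dg : ι → ℕ} {D e : ℕ} {v : ι → MvPolynomial (Fin n) K}
    {a : MvPolynomial (Fin n) K} (ha : a.IsHomogeneous e)
    (hv : HomVec dg D v) : HomVec dg (e + D) (a • v) := by
  intro p
  refine ⟨?_, fun h => ?_⟩
  · by_cases hp : D < dg p
    · simp [(hv p).2 hp, isHomogeneous_zero]
    · have := ha.mul (hv p).1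
      rw [show e + D - dg p = e + (D - dg p) by omega]
      exact this
  · simp [(hv p).2 (by omega)]

lemma HomVec.single (dg : ι → ℕ) {e : ℕ} (q : ι) {a : MvPolynomial (Fin n) K}
    (ha : a.IsHomogeneous e) : HomVec dg (e + dg q) (Pi.single q a) := by
  intro p
  by_cases h : p = q
  · subst h
    simp only [Pi.single_eq_same, Nat.add_sub_cancel]
    exact ⟨ha, fun h => by omega⟩
  · rw [Pi.single_eq_of_ne h]
    exact ⟨isHomogeneous_zero _ _ _, fun _ => rfl⟩

/-- homogeneous component -/
def comp {K : Type*} [Field K] {n : ℕ} {ι : Type} (dg : ι → ℕ) (D : ℕ) :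
    (ι → MvPolynomial (Fin n) K) →ₗ[K] (ι → MvPolynomial (Fin n) K) :=
  LinearMap.pi fun p => if dg p ≤ D then
    (homogeneousComponent (D - dg p)).comp (LinearMap.proj p) else 0

lemma comp_apply (dg : ι → ℕ) (D : ℕ) (v : ι → MvPolynomial (Fin n) K) (p : ι) :
    comp dg D v p = if dg p ≤ D then homogeneousComponent (D - dg p) (v p) else 0 := by
  simp only [comp, LinearMap.pi_apply]
  split_ifs <;> simp

lemma comp_hom (dg : ι → ℕ) (D : ℕ) (v : ι → MvPolynomial (Fin n) K) :
    HomVec dg D (comp dg D v) := by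
  intro p
  rw [comp_apply]
  split_ifs with h
  · exact ⟨homogeneousComponent_isHomogeneous _ _, fun h' => by omega⟩
  · exact ⟨isHomogeneous_zero _ _ _, fun _ => rfl⟩

lemma comp_of_hom {dg : ι → ℕ} {D : ℕ} {v : ι → MvPolynomial (Fin n) K}
    (E : ℕ) (h : HomVec dg D v) :
    comp dg E v = if E = D then v else 0 := by
  funext p
  rw [comp_apply]
  by_cases hp : D < dg p
  · have := (h p).2 hp
    split_ifs <;> simp [this]
  · by_cases hE : E = D
    · subst hE
      rw [if_pos (by omega), if_pos rfl]
      exact homogeneousComponent_eq_self (h p).1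
    · rw [if_neg hE]
      split_ifs with h2
      · rw [homogeneousComponent_of_mem ((mem_homogeneousSubmodule _ _).2 (h p).1),
          if_neg (by omega)]
        rfl
      · rfl

lemma GrMap.comp_comm [Fintype ι] {dι : ι → ℕ} {dκ : κ → ℕ}
    {f : (ι → MvPolynomial (Fin n) K) →ₗ[MvPolynomial (Fin n) K] (κ → MvPolynomial (Fin n) K)}
    (hf : GrMap dι dκ f) (D : ℕ) (v : ι → MvPolynomial (Fin n) K) :
    f (comp dι D v) = comp dκ D (f v) := by
  have key : ∀ (q : ι) (a : MvPolynomial (Fin n) K),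
      f (comp dι D (Pi.single q a)) = comp dκ D (f (Pi.single q a)) := by
    intro q a
    induction a using MvPolynomial.induction_on' with
    | monomial u c =>
      have h1 : HomVec dι (u.degree + dι q) (Pi.single q (monomial u c)) :=
        HomVec.single dι q (isHomogeneous_monomial c rfl)
      rw [comp_of_hom D h1, comp_of_hom D (hf _ _ h1)]
      split_ifs <;> simp
    | add a b ha hb =>
      rw [Pi.single_add, map_add, map_add, map_add, map_add, ha, hb]
  have : v = ∑ q, Pi.single q (v q) := (Finset.univ_sum_single v).symm
  rw [this]
  simp only [map_sum, key]

lemma exists_hom_lift [Fintype ι] {dι : ι → ℕ} {dκ : κ → ℕ}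
    {f : (ι → MvPolynomial (Fin n) K) →ₗ[MvPolynomial (Fin n) K] (κ → MvPolynomial (Fin n) K)}
    (hf : GrMap dι dκ f) {D : ℕ} {u : κ → MvPolynomial (Fin n) K} (hu : HomVec dκ D u)
    (h : u ∈ LinearMap.range f) : ∃ v, HomVec dι D v ∧ f v = u := by
  obtain ⟨v, rfl⟩ := h
  refine ⟨comp dι D v, comp_hom _ _ _, ?_⟩
  rw [hf.comp_comm, comp_of_hom D hu, if_pos rfl]

/-- linear map with prescribed images of the basis -/
def lmk {K : Type*} [Field K] {n : ℕ} {ι κ : Type} [Fintype ι]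
    (w : ι → κ → MvPolynomial (Fin n) K) :
    (ι → MvPolynomial (Fin n) K) →ₗ[MvPolynomial (Fin n) K] (κ → MvPolynomial (Fin n) K) :=
  Fintype.linearCombination (MvPolynomial (Fin n) K) w

lemma lmk_apply [Fintype ι] (w : ι → κ → MvPolynomial (Fin n) K)
    (v : ι → MvPolynomial (Fin n) K) : lmk w v = ∑ q, v q • w q := by
  simp [lmk, Fintype.linearCombination_apply]

lemma map_eq_sum [Fintype ι] {M : Type*} [AddCommGroup M] [Module (MvPolynomial (Fin n) K) M]
    (f : (ι → MvPolynomial (Fin n) K) →ₗ[MvPolynomial (Fin n) K] M)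
    (v : ι → MvPolynomial (Fin n) K) : f v = ∑ q, v q • f (Pi.single q 1) := by
  conv_lhs => rw [← Finset.univ_sum_single v, map_sum]
  refine Finset.sum_congr rfl fun q _ => ?_
  rw [← map_smul]
  congr 1
  rw [← Pi.single_smul, smul_eq_mul, mul_one]

lemma lmk_single [Fintype ι] (w : ι → κ → MvPolynomial (Fin n) K) (q : ι) :
    lmk w (Pi.single q 1) = w q := by
  simp [lmk]

lemma lmk_graded [Fintype ι] {dι : ι → ℕ} {dκ : κ → ℕ}
    (w : ι → κ → MvPolynomial (Fin n) K) (hw : ∀ q, HomVec dκ (dι q) (w q)) :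
    GrMap dι dκ (lmk w) := by
  intro D v hv
  rw [lmk_apply]
  refine HomVec.sum _ _ fun q _ => ?_
  by_cases h : D < dι q
  · rw [(hv q).2 h, zero_smul]; exact HomVec.zero _ _
  · have := HomVec.smul (hv q).1 (hw q)
    rwa [Nat.sub_add_cancel (by omega)] at this

lemma grMap_of_single [Fintype ι] {dι : ι → ℕ} {dκ : κ → ℕ}
    {f : (ι → MvPolynomial (Fin n) K) →ₗ[MvPolynomial (Fin n) K] (κ → MvPolynomial (Fin n) K)}
    (h : ∀ q, HomVec dκ (dι q) (f (Pi.single q 1))) : GrMap dι dκ f := by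
  have : f = lmk (fun q => f (Pi.single q 1)) := by
    ext1 q
    ext1
    simp [lmk_single]
  rw [this]
  exact lmk_graded _ h

lemma exists_map_lift [Fintype ι] [Fintype μ] {dι : ι → ℕ} {dκ : κ → ℕ} {dμ : μ → ℕ}
    {f : (ι → MvPolynomial (Fin n) K) →ₗ[MvPolynomial (Fin n) K] (κ → MvPolynomial (Fin n) K)}
    {g : (μ → MvPolynomial (Fin n) K) →ₗ[MvPolynomial (Fin n) K] (κ → MvPolynomial (Fin n) K)}
    (hf : GrMap dι dκ f) (hg : GrMap dμ dκ g) (h : LinearMap.range f ≤ LinearMap.range g) :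
    ∃ φ : (ι → MvPolynomial (Fin n) K) →ₗ[MvPolynomial (Fin n) K] (μ → MvPolynomial (Fin n) K),
      GrMap dι dμ φ ∧ ∀ v, g (φ v) = f v := by
  have : ∀ q, ∃ w, HomVec dμ (dι q) w ∧ g w = f (Pi.single q 1) := fun q =>
    exists_hom_lift hg (hf _ _ (by simpa using HomVec.single dι q (isHomogeneous_one _ K)))
      (h ⟨_, rfl⟩)
  choose w hw hw2 using this
  refine ⟨lmk w, lmk_graded w hw, fun v => ?_⟩
  rw [lmk_apply, map_sum, map_eq_sum f v]
  simp [hw2]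

end graded

/-- Graded free resolutions, with arbitrary finite index types. -/
structure Res {K : Type*} [Field K] {n : ℕ} (J : Ideal (MvPolynomial (Fin n) K)) where
  ι : ℕ → Type
  fin : ∀ i, Fintype (ι i)
  deg : (i : ℕ) → ι i → ℕ
  aug : (ι 0 → MvPolynomial (Fin n) K) →ₗ[MvPolynomial (Fin n) K] (Unit → MvPolynomial (Fin n) K)
  aug_gr : GrMap (deg 0) (fun _ => 0) aug
  aug_range : ∀ s, s ∈ J ↔ (fun _ => s) ∈ LinearMap.range aug
  d : (i : ℕ) → (ι (i + 1) → MvPolynomial (Fin n) K) →ₗ[MvPolynomial (Fin n) K]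
      (ι i → MvPolynomial (Fin n) K)
  d_gr : ∀ i, GrMap (deg (i + 1)) (deg i) (d i)
  exact_zero : LinearMap.range (d 0) = LinearMap.ker aug
  exact_succ : ∀ i, LinearMap.range (d (i + 1)) = LinearMap.ker (d i)

attribute [instance] Res.fin

/-- regularity at most `r` -/
def RegLE {K : Type*} [Field K] {n : ℕ} (J : Ideal (MvPolynomial (Fin n) K)) (r : ℕ) : Prop :=
  ∃ F : Res J, ∀ i p, F.deg i p ≤ r + i

lemma RegLE.mono {K : Type*} [Field K] {n : ℕ} {J : Ideal (MvPolynomial (Fin n) K)} {r s : ℕ}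
    (h : RegLE J r) (hrs : r ≤ s) : RegLE J s := by
  obtain ⟨F, hF⟩ := h
  exact ⟨F, fun i p => (hF i p).trans (by omega)⟩

lemma regLE_bot {K : Type*} [Field K] {n : ℕ} (r : ℕ) :
    RegLE (⊥ : Ideal (MvPolynomial (Fin n) K)) r := by
  refine ⟨{ ι := fun _ => Empty, fin := fun _ => inferInstance, deg := fun _ p => p.elim,
            aug := 0, aug_gr := fun D v _ => HomVec.zero _ _, aug_range := ?_,
            d := fun _ => 0, d_gr := fun i D v _ => HomVec.zero _ _,
            exact_zero := ?_, exact_succ := ?_ }, fun i p => p.elim⟩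
  · intro s
    simp [funext_iff]
  · ext v; simp [Subsingleton.elim v 0]
  · intro i; ext v; simp [Subsingleton.elim v 0]

/-- index types of the resolution of the unit ideal -/
def topι : ℕ → Type
  | 0 => Unit
  | _ + 1 => Empty

instance topFin : ∀ i, Fintype (topι i)
  | 0 => inferInstanceAs (Fintype Unit)
  | _ + 1 => inferInstanceAs (Fintype Empty)

instance topEmpty (i : ℕ) : IsEmpty (topι (i + 1)) := inferInstanceAs (IsEmpty Empty)

lemma regLE_top {K : Type*} [Field K] {n : ℕ} (r : ℕ) :
    RegLE (⊤ : Ideal (MvPolynomial (Fin n) K)) r := by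
  refine ⟨{ ι := topι, fin := topFin, deg := fun _ _ => 0,
            aug := LinearMap.id (M := Unit → MvPolynomial (Fin n) K),
            aug_gr := fun D v h => h, aug_range := ?_,
            d := fun _ => 0, d_gr := fun i D v _ => HomVec.zero _ _,
            exact_zero := ?_, exact_succ := ?_ }, fun i p => Nat.zero_le _⟩
  · intro s
    refine ⟨fun _ => ⟨fun _ => s, rfl⟩, fun _ => trivial⟩
  · rw [LinearMap.range_zero]
    exact (LinearMap.ker_id (M := Unit → MvPolynomial (Fin n) K)).symm
  · intro i
    ext v
    have : v = 0 := Subsingleton.elim _ _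
    simp [this]

section cone
variable {K : Type*} [Field K] {n : ℕ} {J L : Ideal (MvPolynomial (Fin n) K)}

lemma Res.d_d (F : Res J) (i : ℕ) (v) : F.d i (F.d (i + 1) v) = 0 := by
  have : F.d (i + 1) v ∈ LinearMap.ker (F.d i) := by
    rw [← F.exact_succ]; exact ⟨v, rfl⟩
  exact this

lemma Res.aug_d (F : Res J) (v) : F.aug (F.d 0 v) = 0 := by
  have : F.d 0 v ∈ LinearMap.ker F.aug := by
    rw [← F.exact_zero]; exact ⟨v, rfl⟩
  exact this

lemma exists_chain_map (F : Res J) (E : Res L) (hJL : J ≤ L) :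
    ∃ φ : ∀ i, (F.ι i → MvPolynomial (Fin n) K) →ₗ[MvPolynomial (Fin n) K]
        (E.ι i → MvPolynomial (Fin n) K),
      (∀ i, GrMap (F.deg i) (E.deg i) (φ i)) ∧ (∀ v, E.aug (φ 0 v) = F.aug v) ∧
      ∀ i v, E.d i (φ (i + 1) v) = φ i (F.d i v) := by
  have h0 := exists_map_lift F.aug_gr E.aug_gr (by
    rintro _ ⟨v, rfl⟩
    have h1 : F.aug v () ∈ J := (F.aug_range _).2 ⟨v, rfl⟩
    exact (E.aug_range _).1 (hJL h1))
  let St : ℕ → Type _ := fun i =>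
    {φ : (F.ι i → MvPolynomial (Fin n) K) →ₗ[MvPolynomial (Fin n) K]
        (E.ι i → MvPolynomial (Fin n) K) //
      GrMap (F.deg i) (E.deg i) φ ∧ ∀ v, φ (F.d i v) ∈ LinearMap.range (E.d i)}
  have step : ∀ i (φ : St i), ∃ ψ : St (i + 1), ∀ v, E.d i (ψ.1 v) = φ.1 (F.d i v) := by
    rintro i ⟨φ, hφ1, hφ2⟩
    obtain ⟨ψ, hψ1, hψ2⟩ := exists_map_lift (f := φ ∘ₗ F.d i) (g := E.d i)
      (dι := F.deg (i + 1)) (dκ := E.deg i) (fun D v hv => hφ1 _ _ (F.d_gr i _ _ hv)) (E.d_gr i)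
      (by rintro _ ⟨v, rfl⟩; exact hφ2 v)
    refine ⟨⟨ψ, hψ1, fun v => ?_⟩, hψ2⟩
    rw [E.exact_succ, LinearMap.mem_ker, hψ2]
    simp [F.d_d]
  choose nxt hnxt using step
  obtain ⟨φ0, h01, h02⟩ := h0
  let φ : ∀ i, St i := fun i => Nat.rec (motive := St) ⟨φ0, h01, fun v => by
    rw [E.exact_zero, LinearMap.mem_ker, h02, F.aug_d]⟩ (fun i s => nxt i s) i
  exact ⟨fun i => (φ i).1, fun i => (φ i).2.1, h02, fun i v => hnxt i (φ i) v⟩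

/-- index types of the cone -/
def coneι (a b : ℕ → Type) : ℕ → Type
  | 0 => a 0 ⊕ b 0
  | i + 1 => a i ⊕ (a (i + 1) ⊕ b (i + 1))

instance coneFin (a b : ℕ → Type) [∀ i, Fintype (a i)] [∀ i, Fintype (b i)] :
    ∀ i, Fintype (coneι a b i)
  | 0 => inferInstanceAs (Fintype (a 0 ⊕ b 0))
  | i + 1 => inferInstanceAs (Fintype (a i ⊕ (a (i + 1) ⊕ b (i + 1))))

/-- degrees of the cone -/
def coneDeg (a b : ℕ → Type) (da : ∀ i, a i → ℕ) (db : ∀ i, b i → ℕ) :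
    ∀ i, coneι a b i → ℕ
  | 0 => Sum.elim (da 0) (fun q => db 0 q + 1)
  | i + 1 => Sum.elim (fun p => da i p + 1) (Sum.elim (da (i + 1)) (fun q => db (i + 1) q + 1))

lemma homVec_elim {ι κ : Type} {dι : ι → ℕ} {dκ : κ → ℕ} {D : ℕ}
    {v : ι ⊕ κ → MvPolynomial (Fin n) K} :
    HomVec (Sum.elim dι dκ) D v ↔
      HomVec dι D (fun p => v (Sum.inl p)) ∧ HomVec dκ D (fun p => v (Sum.inr p)) := by
  constructor
  · exact fun h => ⟨fun p => h (Sum.inl p), fun p => h (Sum.inr p)⟩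
  · rintro ⟨h1, h2⟩ (p | p)
    · exact h1 p
    · exact h2 p

lemma homVec_shift {ι : Type} {dι : ι → ℕ} {D : ℕ} {v : ι → MvPolynomial (Fin n) K} :
    HomVec (fun p => dι p + 1) (D + 1) v ↔ HomVec dι D v := by
  unfold HomVec
  simp

lemma homVec_shift_zero {ι : Type} {dι : ι → ℕ} {v : ι → MvPolynomial (Fin n) K}
    (h : HomVec (fun p => dι p + 1) 0 v) : v = 0 :=
  funext fun p => (h p).2 (Nat.succ_pos _)

/-- a graded map stays graded after a shift -/
lemma GrMap.shift {ι κ : Type} {dι : ι → ℕ} {dκ : κ → ℕ}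
    {f : (ι → MvPolynomial (Fin n) K) →ₗ[MvPolynomial (Fin n) K] (κ → MvPolynomial (Fin n) K)}
    (hf : GrMap dι dκ f) : GrMap (fun p => dι p + 1) (fun p => dκ p + 1) f := by
  intro D v hv
  cases D with
  | zero => rw [homVec_shift_zero hv, map_zero]; exact HomVec.zero _ _
  | succ D => exact homVec_shift.2 (hf _ _ (homVec_shift.1 hv))

lemma homVec_x {ι : Type} {dι : ι → ℕ} {D : ℕ} {v : ι → MvPolynomial (Fin n) K}
    {x : MvPolynomial (Fin n) K} (hx : x.IsHomogeneous 1)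
    (h : HomVec (fun p => dι p + 1) D v) : HomVec dι D (x • v) := by
  cases D with
  | zero => rw [homVec_shift_zero h, smul_zero]; exact HomVec.zero _ _
  | succ D => rw [add_comm]; exact HomVec.smul hx (homVec_shift.1 h)

end cone

end SqP

namespace SqP
section cone2
variable {K : Type*} [Field K] {n : ℕ} {J L : Ideal (MvPolynomial (Fin n) K)}

/-- augmentation of the cone -/
def coneAug (F : Res J) (E : Res L) (x : MvPolynomial (Fin n) K) :
    (F.ι 0 ⊕ E.ι 0 → MvPolynomial (Fin n) K) →ₗ[MvPolynomial (Fin n) K]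
      (Unit → MvPolynomial (Fin n) K) where
  toFun v := F.aug (fun p => v (Sum.inl p)) + x • E.aug (fun p => v (Sum.inr p))
  map_add' v w := by
    have h1 : (fun p => (v + w) (Sum.inl p)) = (fun p => v (Sum.inl p)) + fun p => w (Sum.inl p) :=
      rfl
    have h2 : (fun p => (v + w) (Sum.inr p)) = (fun p => v (Sum.inr p)) + fun p => w (Sum.inr p) :=
      rfl
    rw [h1, h2, map_add, map_add, smul_add]; abel
  map_smul' c v := by
    have h1 : (fun p => (c • v) (Sum.inl p)) = c • (fun p => v (Sum.inl p)) := rfl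
    have h2 : (fun p => (c • v) (Sum.inr p)) = c • (fun p => v (Sum.inr p)) := rfl
    rw [h1, h2, map_smul, map_smul, RingHom.id_apply, smul_add, smul_comm x c]

/-- lower part of the cone differential -/
def coneLow {a b c e : Type}
    (f : (b → MvPolynomial (Fin n) K) →ₗ[MvPolynomial (Fin n) K] (a → MvPolynomial (Fin n) K))
    (g : (c → MvPolynomial (Fin n) K) →ₗ[MvPolynomial (Fin n) K] (e → MvPolynomial (Fin n) K))
    (φ : (a → MvPolynomial (Fin n) K) →ₗ[MvPolynomial (Fin n) K] (e → MvPolynomial (Fin n) K))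
    (x : MvPolynomial (Fin n) K) :
    (a ⊕ (b ⊕ c) → MvPolynomial (Fin n) K) →ₗ[MvPolynomial (Fin n) K]
      (a ⊕ e → MvPolynomial (Fin n) K) where
  toFun v := Sum.elim (f (fun p => v (Sum.inr (Sum.inl p))) + x • (fun p => v (Sum.inl p)))
    (g (fun p => v (Sum.inr (Sum.inr p))) - φ (fun p => v (Sum.inl p)))
  map_add' v w := by
    have h1 : (fun p => (v + w) (Sum.inl p)) = (fun p => v (Sum.inl p)) + fun p => w (Sum.inl p) :=
      rfl
    have h2 : (fun p => (v + w) (Sum.inr (Sum.inl p))) =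
      (fun p => v (Sum.inr (Sum.inl p))) + fun p => w (Sum.inr (Sum.inl p)) := rfl
    have h3 : (fun p => (v + w) (Sum.inr (Sum.inr p))) =
      (fun p => v (Sum.inr (Sum.inr p))) + fun p => w (Sum.inr (Sum.inr p)) := rfl
    rw [h1, h2, h3, map_add, map_add, map_add]
    ext1 (p | p)
    · simp; ring
    · simp; ring
  map_smul' c v := by
    have h1 : (fun p => (c • v) (Sum.inl p)) = c • (fun p => v (Sum.inl p)) := rfl
    have h2 : (fun p => (c • v) (Sum.inr (Sum.inl p))) =
      c • (fun p => v (Sum.inr (Sum.inl p))) := rfl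
    have h3 : (fun p => (c • v) (Sum.inr (Sum.inr p))) =
      c • (fun p => v (Sum.inr (Sum.inr p))) := rfl
    rw [h1, h2, h3, map_smul, map_smul, map_smul]
    ext1 (p | p)
    · simp; ring
    · simp; ring

/-- full cone differential -/
def coneFull {a' a b c e : Type}
    (d : (a → MvPolynomial (Fin n) K) →ₗ[MvPolynomial (Fin n) K] (a' → MvPolynomial (Fin n) K))
    (f : (b → MvPolynomial (Fin n) K) →ₗ[MvPolynomial (Fin n) K] (a → MvPolynomial (Fin n) K))
    (g : (c → MvPolynomial (Fin n) K) →ₗ[MvPolynomial (Fin n) K] (e → MvPolynomial (Fin n) K))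
    (φ : (a → MvPolynomial (Fin n) K) →ₗ[MvPolynomial (Fin n) K] (e → MvPolynomial (Fin n) K))
    (x : MvPolynomial (Fin n) K) :
    (a ⊕ (b ⊕ c) → MvPolynomial (Fin n) K) →ₗ[MvPolynomial (Fin n) K]
      (a' ⊕ (a ⊕ e) → MvPolynomial (Fin n) K) where
  toFun v := Sum.elim (-d (fun p => v (Sum.inl p))) (coneLow f g φ x v)
  map_add' v w := by
    have h1 : (fun p => (v + w) (Sum.inl p)) = (fun p => v (Sum.inl p)) + fun p => w (Sum.inl p) :=
      rfl
    rw [h1, map_add, map_add]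
    ext1 (p | p)
    · simp; ring
    · simp
  map_smul' c v := by
    have h1 : (fun p => (c • v) (Sum.inl p)) = c • (fun p => v (Sum.inl p)) := rfl
    rw [h1, map_smul, map_smul]
    ext1 (p | p)
    · simp
    · simp

/-- cone differentials -/
def coneD (F : Res J) (E : Res L) (x : MvPolynomial (Fin n) K)
    (φ : ∀ i, (F.ι i → MvPolynomial (Fin n) K) →ₗ[MvPolynomial (Fin n) K]
        (E.ι i → MvPolynomial (Fin n) K)) :
    ∀ i, (coneι F.ι E.ι (i + 1) → MvPolynomial (Fin n) K) →ₗ[MvPolynomial (Fin n) K]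
      (coneι F.ι E.ι i → MvPolynomial (Fin n) K)
  | 0 => coneLow (F.d 0) (E.d 0) (φ 0) x
  | i + 1 => coneFull (F.d i) (F.d (i + 1)) (E.d (i + 1)) (φ (i + 1)) x

lemma coneLow_gr {a b c e : Type} {da : a → ℕ} {db : b → ℕ} {dc : c → ℕ} {de : e → ℕ}
    {f : (b → MvPolynomial (Fin n) K) →ₗ[MvPolynomial (Fin n) K] (a → MvPolynomial (Fin n) K)}
    {g : (c → MvPolynomial (Fin n) K) →ₗ[MvPolynomial (Fin n) K] (e → MvPolynomial (Fin n) K)}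
    {φ : (a → MvPolynomial (Fin n) K) →ₗ[MvPolynomial (Fin n) K] (e → MvPolynomial (Fin n) K)}
    {x : MvPolynomial (Fin n) K} (hf : GrMap db da f) (hg : GrMap dc de g) (hφ : GrMap da de φ)
    (hx : x.IsHomogeneous 1) :
    GrMap (Sum.elim (fun p => da p + 1) (Sum.elim db (fun q => dc q + 1)))
      (Sum.elim da (fun q => de q + 1)) (coneLow f g φ x) := by
  intro D v hv
  obtain ⟨h1, h2⟩ := homVec_elim.1 hv
  obtain ⟨h2, h3⟩ := homVec_elim.1 h2
  exact homVec_elim.2 ⟨(hf _ _ h2).add (homVec_x hx h1), (hg.shift _ _ h3).sub (hφ.shift _ _ h1)⟩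

lemma coneFull_gr {a' a b c e : Type} {da' : a' → ℕ} {da : a → ℕ} {db : b → ℕ} {dc : c → ℕ}
    {de : e → ℕ}
    {d : (a → MvPolynomial (Fin n) K) →ₗ[MvPolynomial (Fin n) K] (a' → MvPolynomial (Fin n) K)}
    {f : (b → MvPolynomial (Fin n) K) →ₗ[MvPolynomial (Fin n) K] (a → MvPolynomial (Fin n) K)}
    {g : (c → MvPolynomial (Fin n) K) →ₗ[MvPolynomial (Fin n) K] (e → MvPolynomial (Fin n) K)}
    {φ : (a → MvPolynomial (Fin n) K) →ₗ[MvPolynomial (Fin n) K] (e → MvPolynomial (Fin n) K)}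
    {x : MvPolynomial (Fin n) K} (hd : GrMap da da' d)
    (hf : GrMap db da f) (hg : GrMap dc de g) (hφ : GrMap da de φ)
    (hx : x.IsHomogeneous 1) :
    GrMap (Sum.elim (fun p => da p + 1) (Sum.elim db (fun q => dc q + 1)))
      (Sum.elim (fun p => da' p + 1) (Sum.elim da (fun q => de q + 1)))
      (coneFull d f g φ x) := by
  intro D v hv
  refine homVec_elim.2 ⟨?_, coneLow_gr hf hg hφ hx _ _ hv⟩
  exact (hd.shift _ _ (homVec_elim.1 hv).1).neg

/-- The mapping cone lemma: `reg (J + xL) ≤ max (reg J) (reg L + 1)`. -/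
lemma regLE_cone {x : MvPolynomial (Fin n) K} (hx : x.IsHomogeneous 1) (hx0 : x ≠ 0)
    (hJL : J ≤ L) (hcol : ∀ f, x * f ∈ J → f ∈ J) {r : ℕ} (hJ : RegLE J (r + 1))
    (hL : RegLE L r) : RegLE (J ⊔ Ideal.span {x} * L) (r + 1) := by
  obtain ⟨F, hF⟩ := hJ
  obtain ⟨E, hE⟩ := hL
  obtain ⟨φ, φgr, φ0, φd⟩ := exists_chain_map F E hJL
  -- the key computation
  have augE_mem : ∀ c, E.aug c () ∈ L := fun c => (E.aug_range _).2 ⟨c, rfl⟩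
  have augF_mem : ∀ c, F.aug c () ∈ J := fun c => (F.aug_range _).2 ⟨c, rfl⟩
  refine ⟨{ ι := coneι F.ι E.ι, fin := coneFin F.ι E.ι, deg := coneDeg F.ι E.ι F.deg E.deg,
            aug := coneAug F E x, aug_gr := ?_, aug_range := ?_,
            d := coneD F E x φ, d_gr := ?_, exact_zero := ?_, exact_succ := ?_ }, ?_⟩
  · intro D v hv
    obtain ⟨h1, h2⟩ := homVec_elim.1 hv
    exact (F.aug_gr _ _ h1).add (homVec_x hx (E.aug_gr.shift _ _ h2))
  · intro s
    rw [Submodule.mem_sup]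
    constructor
    · rintro ⟨y, hy, z, hz, rfl⟩
      rw [Ideal.mem_span_singleton_mul] at hz
      obtain ⟨z, hz, rfl⟩ := hz
      obtain ⟨b, hb⟩ := (F.aug_range _).1 hy
      obtain ⟨c, hc⟩ := (E.aug_range _).1 hz
      refine ⟨Sum.elim b c, ?_⟩
      change F.aug b + x • E.aug c = _
      rw [hb, hc]
      rfl
    · rintro ⟨v, hv⟩
      have := congrFun hv ()
      refine ⟨_, augF_mem (fun p => v (Sum.inl p)), x * E.aug (fun p => v (Sum.inr p)) (), ?_, this⟩
      rw [Ideal.mem_span_singleton_mul]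
      exact ⟨_, augE_mem _, rfl⟩
  · rintro (_ | i)
    · exact coneLow_gr (F.d_gr 0) (E.d_gr 0) (φgr 0) hx
    · exact coneFull_gr (F.d_gr i) (F.d_gr _) (E.d_gr _) (φgr _) hx
  · ext v
    constructor
    · rintro ⟨w, rfl⟩
      change F.aug (F.d 0 (fun p => w (Sum.inr (Sum.inl p))) + x • (fun p => w (Sum.inl p))) +
        x • E.aug (E.d 0 (fun p => w (Sum.inr (Sum.inr p))) - φ 0 (fun p => w (Sum.inl p))) = 0
      rw [map_add, map_sub, F.aug_d, E.aug_d, φ0, map_smul]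
      simp
    · intro hv
      have hv : F.aug (fun p => v (Sum.inl p)) + x • E.aug (fun p => v (Sum.inr p)) = 0 := hv
      set b := fun p => v (Sum.inl p) with hb
      set c := fun p => v (Sum.inr p) with hc
      have h1 : E.aug c () ∈ J := by
        apply hcol
        have := congrFun hv ()
        have h2 : x * E.aug c () = - F.aug b () := by
          simp only [Pi.add_apply, Pi.smul_apply, smul_eq_mul, Pi.zero_apply] at this
          linear_combination this
        rw [h2]
        exact J.neg_mem (augF_mem _)
      obtain ⟨a, ha⟩ := (F.aug_range _).1 h1
      have ha : F.aug a = E.aug c := ha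
      have h3 : c - φ 0 a ∈ LinearMap.range (E.d 0) := by
        rw [E.exact_zero, LinearMap.mem_ker, map_sub, φ0, ha, sub_self]
      have h4 : b + x • a ∈ LinearMap.range (F.d 0) := by
        rw [F.exact_zero, LinearMap.mem_ker, map_add, map_smul, ha, hv]
      obtain ⟨c', hc'⟩ := h3
      obtain ⟨b', hb'⟩ := h4
      refine ⟨(Sum.elim (-a) (Sum.elim b' c') : _ ⊕ (_ ⊕ _) → _), ?_⟩
      change Sum.elim (F.d 0 b' + x • (-a)) (E.d 0 c' - φ 0 (-a)) = v
      rw [hb', hc', map_neg]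
      ext1 (p | p)
      · simp [hb]
      · simp [hc]
  · rintro (_ | i)
    · ext v
      constructor
      · rintro ⟨w, rfl⟩
        rw [LinearMap.mem_ker]
        change Sum.elim (F.d 0 (F.d 1 (fun p => w (Sum.inr (Sum.inl p))) +
            x • (fun p => w (Sum.inl p))) + x • (-F.d 0 (fun p => w (Sum.inl p))))
          (E.d 0 (E.d 1 (fun p => w (Sum.inr (Sum.inr p))) - φ 1 (fun p => w (Sum.inl p))) -
            φ 0 (-F.d 0 (fun p => w (Sum.inl p)))) = 0
        rw [map_add, map_sub, F.d_d, E.d_d, φd, map_smul, map_neg]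
        ext1 (p | p) <;> simp
      · intro hv
        have hv : Sum.elim (F.d 0 (fun p => v (Sum.inr (Sum.inl p))) + x • (fun p => v (Sum.inl p)))
          (E.d 0 (fun p => v (Sum.inr (Sum.inr p))) - φ 0 (fun p => v (Sum.inl p))) = 0 := hv
        set a := fun p => v (Sum.inl p) with ha
        set b := fun p => v (Sum.inr (Sum.inl p)) with hb
        set c := fun p => v (Sum.inr (Sum.inr p)) with hc
        have e1 : F.d 0 b + x • a = 0 := funext fun p => congrFun hv (Sum.inl p)
        have e2 : E.d 0 c - φ 0 a = 0 := funext fun p => congrFun hv (Sum.inr p)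
        have e3 : a ∈ LinearMap.range (F.d 0) := by
          rw [F.exact_zero, LinearMap.mem_ker]
          have := congrArg F.aug e1
          rw [map_add, F.aug_d, zero_add, map_smul, map_zero] at this
          exact (smul_eq_zero.1 this).resolve_left hx0
        obtain ⟨a', ha'⟩ := e3
        have h3 : c - φ 1 a' ∈ LinearMap.range (E.d 1) := by
          rw [E.exact_succ, LinearMap.mem_ker, map_sub, φd, ha', e2]
        have h4 : b + x • a' ∈ LinearMap.range (F.d 1) := by
          rw [F.exact_succ, LinearMap.mem_ker, map_add, map_smul, ha', e1]
        obtain ⟨c', hc'⟩ := h3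
        obtain ⟨b', hb'⟩ := h4
        refine ⟨(Sum.elim (-a') (Sum.elim b' c') : _ ⊕ (_ ⊕ _) → _), ?_⟩
        change Sum.elim (-F.d 0 (-a')) (Sum.elim (F.d 1 b' + x • (-a')) (E.d 1 c' - φ 1 (-a'))) = v
        rw [hb', hc', map_neg, map_neg, ha']
        ext1 (p | p | p)
        · simp [ha]
        · simp [hb]
        · simp [hc]
    · ext v
      constructor
      · rintro ⟨w, rfl⟩
        rw [LinearMap.mem_ker]
        change Sum.elim (-F.d i (-F.d (i + 1) (fun p => w (Sum.inl p))))
          (Sum.elim (F.d (i + 1) (F.d (i + 2) (fun p => w (Sum.inr (Sum.inl p))) +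
            x • (fun p => w (Sum.inl p))) + x • (-F.d (i + 1) (fun p => w (Sum.inl p))))
          (E.d (i + 1) (E.d (i + 2) (fun p => w (Sum.inr (Sum.inr p))) -
            φ (i + 2) (fun p => w (Sum.inl p))) -
            φ (i + 1) (-F.d (i + 1) (fun p => w (Sum.inl p))))) = 0
        rw [map_add, map_sub, F.d_d, E.d_d, φd, map_smul, map_neg, map_neg, F.d_d]
        ext1 (p | p | p) <;> simp
      · intro hv
        have hv : Sum.elim (-F.d i (fun p => v (Sum.inl p)))
          (Sum.elim (F.d (i + 1) (fun p => v (Sum.inr (Sum.inl p))) + x • (fun p => v (Sum.inl p)))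
          (E.d (i + 1) (fun p => v (Sum.inr (Sum.inr p))) -
            φ (i + 1) (fun p => v (Sum.inl p)))) = 0 := hv
        set a := fun p => v (Sum.inl p) with ha
        set b := fun p => v (Sum.inr (Sum.inl p)) with hb
        set c := fun p => v (Sum.inr (Sum.inr p)) with hc
        have e0 : -F.d i a = 0 := funext fun p => congrFun hv (Sum.inl p)
        have e1 : F.d (i + 1) b + x • a = 0 := funext fun p => congrFun hv (Sum.inr (Sum.inl p))
        have e2 : E.d (i + 1) c - φ (i + 1) a = 0 :=
          funext fun p => congrFun hv (Sum.inr (Sum.inr p))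
        have e3 : a ∈ LinearMap.range (F.d (i + 1)) := by
          rw [F.exact_succ, LinearMap.mem_ker]
          exact neg_eq_zero.1 e0
        obtain ⟨a', ha'⟩ := e3
        have h3 : c - φ (i + 2) a' ∈ LinearMap.range (E.d (i + 2)) := by
          rw [E.exact_succ, LinearMap.mem_ker, map_sub, φd, ha', e2]
        have h4 : b + x • a' ∈ LinearMap.range (F.d (i + 2)) := by
          rw [F.exact_succ, LinearMap.mem_ker, map_add, map_smul, ha', e1]
        obtain ⟨c', hc'⟩ := h3
        obtain ⟨b', hb'⟩ := h4
        refine ⟨(Sum.elim (-a') (Sum.elim b' c') : _ ⊕ (_ ⊕ _) → _), ?_⟩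
        change Sum.elim (-F.d (i + 1) (-a')) (Sum.elim (F.d (i + 2) b' + x • (-a'))
          (E.d (i + 2) c' - φ (i + 2) (-a'))) = v
        rw [hb', hc', map_neg, map_neg, ha']
        ext1 (p | p | p)
        · simp [ha]
        · simp [hb]
        · simp [hc]
  · rintro (_ | i)
    · rintro (p | p)
      · exact hF 0 p
      · exact Nat.succ_le_succ (hE 0 p)
    · rintro (p | p | p)
      · exact Nat.succ_le_succ (hF i p)
      · exact hF (i + 1) p
      · refine (Nat.succ_le_succ (hE (i + 1) p)).trans ?_
        omega

end cone2

end SqP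

namespace SqP
section conv
variable {K : Type*} [Field K] {n : ℕ} {J : Ideal (MvPolynomial (Fin n) K)}

lemma grMap_of_single' {ι κ : Type} [Fintype ι] [DecidableEq ι] {dι : ι → ℕ} {dκ : κ → ℕ}
    {f : (ι → MvPolynomial (Fin n) K) →ₗ[MvPolynomial (Fin n) K] (κ → MvPolynomial (Fin n) K)}
    (h : ∀ q, HomVec dκ (dι q) (f (Pi.single q 1))) : GrMap dι dκ f := by
  apply grMap_of_single
  intro q
  convert h q

lemma HomVec.single' {ι : Type} [DecidableEq ι] (dg : ι → ℕ) (q : ι) :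
    HomVec dg (dg q) (Pi.single q (1 : MvPolynomial (Fin n) K)) := by
  have := HomVec.single dg q (isHomogeneous_one (Fin n) K)
  rw [zero_add] at this
  convert this

lemma regLE_of_gfr {r : ℕ} (F : GradedFreeResolution J)
    (hF : ∀ (i : ℕ) (p : Fin (F.rk i)), F.deg i p ≤ r + i) : RegLE J r := by
  refine ⟨{ ι := fun i => Fin (F.rk i), fin := fun i => inferInstance, deg := F.deg,
            aug := LinearMap.pi fun _ => F.aug, aug_gr := ?_, aug_range := ?_,
            d := F.d, d_gr := ?_, exact_zero := ?_, exact_succ := F.exact_succ }, hF⟩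
  · apply grMap_of_single'
    intro q p
    have : F.aug (Pi.single q 1) = F.gen q := by
      rw [F.aug_apply, Finset.sum_eq_single q]
      · simp
      · intro b _ hb; rw [Pi.single_eq_of_ne hb, zero_mul]
      · simp
    simp only [LinearMap.pi_apply]
    rw [this]
    exact ⟨F.gen_hom q, fun h => absurd h (Nat.not_lt_zero _)⟩
  · intro s
    have hJ : s ∈ J ↔ s ∈ Submodule.span (MvPolynomial (Fin n) K) (Set.range F.gen) := by
      have h := F.gen_span
      rw [Ideal.span] at h
      exact (SetLike.ext_iff.1 h s).symm
    rw [hJ, Submodule.mem_span_range_iff_exists_fun]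
    constructor
    · rintro ⟨c, hc⟩
      refine ⟨c, ?_⟩
      funext _
      simp only [LinearMap.pi_apply]
      rw [F.aug_apply, ← hc]
      simp
    · rintro ⟨c, hc⟩
      refine ⟨c, ?_⟩
      have := congrFun hc ()
      simp only [LinearMap.pi_apply] at this
      rw [← this, F.aug_apply]
      simp
  · intro i
    apply grMap_of_single'
    intro q p
    have h := F.d_graded i q p
    by_cases h0 : F.d i (Pi.single q 1) p = 0
    · rw [h0]
      exact ⟨isHomogeneous_zero _ _ _, fun _ => rfl⟩
    · exact ⟨(h h0).2, fun h' => absurd (h h0).1 (by omega)⟩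
  · rw [F.exact_zero]
    ext v
    simp [_root_.funext_iff]

lemma gfr_of_regLE {r : ℕ} (h : RegLE J r) :
    ∃ F : GradedFreeResolution J, ∀ (i : ℕ) (p : Fin (F.rk i)), F.deg i p ≤ r + i := by
  obtain ⟨F, hF⟩ := h
  let e : ∀ i, F.ι i ≃ Fin (Fintype.card (F.ι i)) := fun i => Fintype.equivFin (F.ι i)
  let E : ∀ i, (Fin (Fintype.card (F.ι i)) → MvPolynomial (Fin n) K) ≃ₗ[MvPolynomial (Fin n) K]
    (F.ι i → MvPolynomial (Fin n) K) := fun i => LinearEquiv.funCongrLeft _ _ (e i)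
  have hE : ∀ i v p, E i v p = v (e i p) := fun i v p => rfl
  have hEs : ∀ i v p, (E i).symm v p = v ((e i).symm p) := fun i v p => rfl
  have E1 : ∀ i q, E i (Pi.single q 1) = Pi.single ((e i).symm q) 1 := by
    intro i q
    funext p
    rw [hE]
    by_cases h : p = (e i).symm q
    · subst h; simp
    · rw [Pi.single_eq_of_ne h, Pi.single_eq_of_ne]
      intro h2; apply h; simp [← h2]
  have augeq : ∀ v : Fin (Fintype.card (F.ι 0)) → MvPolynomial (Fin n) K,
      F.aug (E 0 v) () = ∑ p, v p * F.aug (Pi.single ((e 0).symm p) 1) () := by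
    intro v
    have := map_eq_sum ((LinearMap.proj ()).comp (F.aug ∘ₗ (E 0).toLinearMap)) v
    simp only [LinearMap.comp_apply, LinearEquiv.coe_coe, LinearMap.proj_apply, smul_eq_mul] at this
    rw [this]
    refine Finset.sum_congr rfl fun p _ => ?_
    congr 3
    rw [← E1]
    congr! 
  refine ⟨{ rk := fun i => Fintype.card (F.ι i), deg := fun i p => F.deg i ((e i).symm p),
            gen := fun p => F.aug (Pi.single ((e 0).symm p) 1) (),
            gen_mem := fun p => (F.aug_range _).2 ⟨_, rfl⟩,
            gen_hom := ?_, gen_span := ?_,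
            d := fun i => (E i).symm.toLinearMap ∘ₗ F.d i ∘ₗ (E (i + 1)).toLinearMap,
            d_graded := ?_,
            aug := (LinearMap.proj ()).comp (F.aug ∘ₗ (E 0).toLinearMap),
            aug_apply := augeq,
            exact_zero := ?_, exact_succ := ?_ }, fun i p => hF i _⟩
  · intro p
    have h1 : HomVec (K := K) (n := n) (F.deg 0) (F.deg 0 ((e 0).symm p))
        (Pi.single ((e 0).symm p) 1) := HomVec.single' _ _
    exact (F.aug_gr _ _ h1 ()).1
  · ext s
    rw [F.aug_range, Ideal.span, Submodule.mem_span_range_iff_exists_fun]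
    constructor
    · rintro ⟨c, hc⟩
      refine ⟨E 0 c, ?_⟩
      funext u
      rw [← hc]
      simpa using augeq c
    · rintro ⟨c, hc⟩
      refine ⟨(E 0).symm c, ?_⟩
      have := augeq ((E 0).symm c)
      rw [LinearEquiv.apply_symm_apply, hc] at this
      simpa using this.symm
  · intro i q p
    simp only [LinearMap.comp_apply, LinearEquiv.coe_coe, hEs]
    have h1 : HomVec (F.deg (i + 1)) (F.deg (i + 1) ((e (i + 1)).symm q))
        (E (i + 1) (Pi.single q 1)) := by
      rw [E1]
      exact HomVec.single' _ _
    have h2 := F.d_gr i _ _ h1 ((e i).symm p)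
    intro h
    refine ⟨?_, h2.1⟩
    by_contra h3
    exact h (h2.2 (by omega))
  · ext v
    constructor
    · rintro ⟨w, rfl⟩
      simp [F.aug_d]
    · intro hv
      have hv : F.aug (E 0 v) () = 0 := hv
      have : E 0 v ∈ LinearMap.range (F.d 0) := by
        rw [F.exact_zero, LinearMap.mem_ker]
        funext u
        exact hv
      obtain ⟨w, hw⟩ := this
      refine ⟨(E 1).symm w, ?_⟩
      simp [hw]
  · intro i
    ext v
    constructor
    · rintro ⟨w, rfl⟩
      simp [F.d_d]
    · intro hv
      have : E (i + 1) v ∈ LinearMap.range (F.d (i + 1)) := by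
        rw [F.exact_succ, LinearMap.mem_ker]
        have hv : (E i).symm (F.d i (E (i + 1) v)) = 0 := hv
        simpa using hv
      obtain ⟨w, hw⟩ := this
      refine ⟨(E (i + 2)).symm w, ?_⟩
      simp [hw]

end conv
end SqP

namespace SqP
section mono
variable {K : Type*} [Field K] {n : ℕ}

/-- squarefree monomial ideal of a family of sets -/
def mI (K : Type*) [Field K] {n : ℕ} (Q : Finset (Fin n) → Prop) :
    Ideal (MvPolynomial (Fin n) K) :=
  Ideal.span {f | ∃ A, Q A ∧ f = ∏ v ∈ A, X v}

/-- upward closed families -/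
def Up {n : ℕ} (Q : Finset (Fin n) → Prop) : Prop := ∀ A B, A ⊆ B → Q A → Q B

lemma prod_X_eq (A : Finset (Fin n)) :
    (∏ v ∈ A, X v : MvPolynomial (Fin n) K) = monomial (∑ v ∈ A, Finsupp.single v 1) 1 := by
  rw [MvPolynomial.monomial_sum_one]
  rfl

lemma sum_single_apply (A : Finset (Fin n)) (v : Fin n) :
    (∑ w ∈ A, Finsupp.single w 1 : Fin n →₀ ℕ) v = if v ∈ A then 1 else 0 := by
  simp [Finsupp.finsetSum_apply, Finsupp.single_apply]

lemma mem_mI {Q : Finset (Fin n) → Prop} (hQ : Up Q) (f : MvPolynomial (Fin n) K) :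
    f ∈ mI K Q ↔ ∀ m ∈ f.support, Q m.support := by
  have : {f : MvPolynomial (Fin n) K | ∃ A, Q A ∧ f = ∏ v ∈ A, X v} =
      (fun s => monomial s (1 : K)) '' {s | ∃ A, Q A ∧ s = ∑ v ∈ A, Finsupp.single v 1} := by
    ext f
    constructor
    · rintro ⟨A, hA, rfl⟩
      exact ⟨_, ⟨A, hA, rfl⟩, (prod_X_eq A).symm⟩
    · rintro ⟨_, ⟨A, hA, rfl⟩, rfl⟩
      exact ⟨A, hA, (prod_X_eq A).symm⟩
  rw [mI, this, mem_ideal_span_monomial_image]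
  refine forall₂_congr fun m _ => ?_
  constructor
  · rintro ⟨_, ⟨A, hA, rfl⟩, h⟩
    refine hQ A _ (fun v hv => ?_) hA
    have := h v
    rw [sum_single_apply, if_pos hv] at this
    rw [Finsupp.mem_support_iff]
    omega
  · intro h
    refine ⟨_, ⟨_, h, rfl⟩, fun v => ?_⟩
    rw [sum_single_apply]
    split_ifs with hv
    · rw [Finsupp.mem_support_iff] at hv; omega
    · omega

lemma mI_mono {Q Q' : Finset (Fin n) → Prop} (h : ∀ A, Q A → Q' A) : mI K Q ≤ mI K Q' :=
  Ideal.span_mono fun _ ⟨A, hA, hf⟩ => ⟨A, h A hA, hf⟩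

lemma regLE_split {Q : Finset (Fin n) → Prop} (hQ : Up Q) (u : Fin n) {r : ℕ}
    (h1 : RegLE (mI K fun A => Q (A.erase u)) (r + 1))
    (h2 : RegLE (mI K fun A => Q (insert u A)) r) : RegLE (mI K Q) (r + 1) := by
  have hdel : Up fun A => Q (A.erase u) := fun A B h => hQ _ _ (Finset.erase_subset_erase _ h)
  have key : mI K Q = (mI K fun A => Q (A.erase u)) ⊔
      Ideal.span {(X u : MvPolynomial (Fin n) K)} * mI K fun A => Q (insert u A) := by
    apply le_antisymm
    · refine Ideal.span_le.2 ?_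
      rintro _ ⟨A, hA, rfl⟩
      by_cases hu : u ∈ A
      · apply Ideal.mem_sup_right
        rw [← Finset.mul_prod_erase A _ hu]
        refine Ideal.mul_mem_mul (Ideal.mem_span_singleton_self _) (Ideal.subset_span ⟨_, ?_, rfl⟩)
        show Q (insert u (A.erase u))
        rw [Finset.insert_erase hu]
        exact hA
      · apply Ideal.mem_sup_left
        refine Ideal.subset_span ⟨A, ?_, rfl⟩
        show Q (A.erase u)
        rw [Finset.erase_eq_of_notMem hu]
        exact hA
    · refine sup_le (mI_mono fun A h => hQ _ _ (Finset.erase_subset _ _) h) ?_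
      rw [mI, Ideal.span_mul_span, Ideal.span_le]
      simp only [Set.singleton_mul]
      rintro _ ⟨_, ⟨A, hA, rfl⟩, rfl⟩
      by_cases hu : u ∈ A
      · rw [Finset.insert_eq_of_mem hu] at hA
        exact Ideal.mul_mem_left _ _ (Ideal.subset_span ⟨A, hA, rfl⟩)
      · refine Ideal.subset_span ⟨_, hA, ?_⟩
        rw [Finset.prod_insert hu]
  rw [key]
  refine regLE_cone (isHomogeneous_X K u) (X_ne_zero u) (mI_mono fun A h => ?_) ?_ h1 h2
  · exact hQ _ _ ((Finset.erase_subset _ _).trans (Finset.subset_insert _ _)) h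
  · intro f hf
    rw [mem_mI hdel] at hf ⊢
    intro m hm
    have := hf (m + Finsupp.single u 1) (by
      rw [mem_support_iff, add_comm, coeff_X_mul]
      exact mem_support_iff.1 hm)
    convert this using 1
    ext v
    by_cases hv : v = u
    · simp [hv]
    · simp [hv, Finsupp.single_apply, Ne.symm hv]

lemma regLE_of_never {Q : Finset (Fin n) → Prop} (h : ∀ A, ¬ Q A) (r : ℕ) :
    RegLE (mI K Q) r := by
  have : mI K Q = ⊥ := by
    rw [mI, Ideal.span_eq_bot]
    rintro _ ⟨A, hA, _⟩
    exact absurd hA (h A)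
  rw [this]
  exact regLE_bot r

lemma regLE_of_empty {Q : Finset (Fin n) → Prop} (h : Q ∅) (r : ℕ) :
    RegLE (mI K Q) r := by
  have : mI K Q = ⊤ := by
    rw [Ideal.eq_top_iff_one]
    exact Ideal.subset_span ⟨∅, h, by simp⟩
  rw [this]
  exact regLE_top r

end mono
end SqP

namespace SqP
section comb
variable {V : Type*} {G : SimpleGraph V}

lemma exists_leaf [Finite V] (hG : G.IsAcyclic) {x y : V} (hxy : G.Adj x y) :
    ∃ v u, G.Adj v u ∧ ∀ w, G.Adj v w → w = u := by
  have := Fintype.ofFinite V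
  let S : Set ℕ := {l | ∃ (a b : V) (p : G.Walk a b), p.IsPath ∧ p.length = l}
  have hne : (1 : ℕ) ∈ S := ⟨x, y, SimpleGraph.Walk.cons hxy .nil, by simp [hxy.ne], rfl⟩
  have hbd : BddAbove S := ⟨Fintype.card V, by
    rintro _ ⟨a, b, p, hp, rfl⟩
    exact hp.length_lt.le⟩
  obtain ⟨a, b, p, hp, hl⟩ := Nat.sSup_mem ⟨1, hne⟩ hbd
  have h1 := le_csSup hbd hne
  cases p with
  | nil => simp at hl; omega
  | @cons _ c _ h q =>
    refine ⟨a, c, h, fun w hw => ?_⟩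
    by_cases hs : w ∈ (SimpleGraph.Walk.cons h q).support
    · rw [hG.eq_snd_of_adj_start hp hw hs]
      simp
    · exfalso
      have : (SimpleGraph.Walk.cons h q).length + 1 ∈ S :=
        ⟨w, b, SimpleGraph.Walk.cons hw.symm (SimpleGraph.Walk.cons h q),
          (SimpleGraph.Walk.cons_isPath_iff _ _).2 ⟨hp, hs⟩, rfl⟩
      have := le_csSup hbd this
      omega

lemma exists_leaf_in (hG : G.IsAcyclic) (W : Finset V) {x y : V} (hx : x ∈ W) (hy : y ∈ W)
    (hxy : G.Adj x y) :
    ∃ v ∈ W, ∃ u ∈ W, G.Adj v u ∧ ∀ w ∈ W, G.Adj v w → w = u := by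
  obtain ⟨v, u, h, h'⟩ := exists_leaf (G := G.induce (W : Set V)) (hG.induce _)
    (x := ⟨x, hx⟩) (y := ⟨y, hy⟩) hxy
  refine ⟨v, v.2, u, u.2, h, fun w hw hvw => ?_⟩
  exact congrArg Subtype.val (h' ⟨w, hw⟩ hvw)

lemma exists_good (hG : G.IsAcyclic) (W : Finset V) {x y : V} (hx : x ∈ W) (hy : y ∈ W)
    (hxy : G.Adj x y) :
    ∃ u ∈ W, ∃ v ∈ W, ∃ w, G.Adj u v ∧ (∀ z ∈ W, G.Adj v z → z = u) ∧
      ∀ z ∈ W, G.Adj u z → (∀ t ∈ W, G.Adj z t → t = u) ∨ z = w := by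
  let L : Finset V := W.filter fun v => ∃ u ∈ W, G.Adj v u ∧ ∀ y ∈ W, G.Adj v y → y = u
  have hL : ∀ v ∈ L, ∀ u ∈ W, G.Adj u v → ∀ t ∈ W, G.Adj v t → t = u := by
    intro v hv u hu huv t ht hvt
    obtain ⟨_, u', _, _, h⟩ := Finset.mem_filter.1 hv
    rw [h t ht hvt, h u hu huv.symm]
  by_cases hE : ∃ x ∈ W \ L, ∃ y ∈ W \ L, G.Adj x y
  · obtain ⟨x, hx, y, hy, hxy⟩ := hE
    obtain ⟨u, hu, w, hw, huw, h⟩ := exists_leaf_in hG (W \ L) hx hy hxy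
    have huW := (Finset.mem_sdiff.1 hu).1
    have huL := (Finset.mem_sdiff.1 hu).2
    have : ∃ v ∈ W, G.Adj u v ∧ v ≠ w := by
      by_contra! hcon
      exact huL (Finset.mem_filter.2 ⟨huW, w, (Finset.mem_sdiff.1 hw).1, huw, hcon⟩)
    obtain ⟨v, hv, huv, hvw⟩ := this
    have hvL : v ∈ L := by
      by_contra hvL
      exact hvw (h v (Finset.mem_sdiff.2 ⟨hv, hvL⟩) huv)
    refine ⟨u, huW, v, hv, w, huv, hL v hvL u huW huv, fun z hz huz => ?_⟩
    by_cases hzL : z ∈ L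
    · exact Or.inl (hL z hzL u huW huz)
    · exact Or.inr (h z (Finset.mem_sdiff.2 ⟨hz, hzL⟩) huz)
  · push Not at hE
    obtain ⟨v, hv, u, hu, hvu, h⟩ := exists_leaf_in hG W hx hy hxy
    refine ⟨u, hu, v, hv, v, hvu.symm, h, fun z hz huz => ?_⟩
    by_cases hzL : z ∈ L
    · exact Or.inl (hL z hzL u hu huz)
    · by_cases huL : u ∈ L
      · exact Or.inr (hL u huL v hv hvu z hz huz)
      · exact absurd huz (hE u (Finset.mem_sdiff.2 ⟨hu, huL⟩) z (Finset.mem_sdiff.2 ⟨hz, hzL⟩))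

/-- the edges of `M` lie inside `B` -/
def Ins (M : Finset (Sym2 V)) (B : Finset V) : Prop := ∀ e ∈ M, ∀ v ∈ e, v ∈ B

/-- the induced subgraph on `B` has a matching with `k` edges -/
def Mt (G : SimpleGraph V) (B : Finset V) (k : ℕ) : Prop :=
  ∃ M, IsMatchingSet G M ∧ Ins M B ∧ M.card = k

lemma isMatchingSet_subset {M N : Finset (Sym2 V)} (h : IsMatchingSet G M) (hN : N ⊆ M) :
    IsMatchingSet G N :=
  ⟨fun e he => h.1 e (hN he), fun e he f hf => h.2 e (hN he) f (hN hf)⟩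

lemma Mt.mono {B B' : Finset V} {k : ℕ} (h : Mt G B k) (hB : B ⊆ B') : Mt G B' k := by
  obtain ⟨M, h1, h2, h3⟩ := h
  exact ⟨M, h1, fun e he v hv => hB (h2 e he v hv), h3⟩

lemma mt_zero (B : Finset V) : Mt G B 0 :=
  ⟨∅, ⟨by simp, by simp⟩, by intro e he; simp at he, rfl⟩

lemma isMatchingSet_insert {M : Finset (Sym2 V)} (h : IsMatchingSet G M) {u v : V}
    (huv : G.Adj u v) (hu : ∀ e ∈ M, u ∉ e) (hv : ∀ e ∈ M, v ∉ e) :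
    IsMatchingSet G (insert s(u, v) M) ∧ s(u, v) ∉ M := by
  refine ⟨⟨?_, ?_⟩, fun hm => hu _ hm (by simp)⟩
  · intro e he
    rcases Finset.mem_insert.1 he with rfl | he
    · exact huv
    · exact h.1 e he
  · intro e he f hf hef x hxe hxf
    rcases Finset.mem_insert.1 he with rfl | he1
    · rcases Finset.mem_insert.1 hf with rfl | hf1
      · exact hef rfl
      · rcases Sym2.mem_iff.1 hxe with rfl | rfl
        · exact hu f hf1 hxf
        · exact hv f hf1 hxf
    · rcases Finset.mem_insert.1 hf with rfl | hf1
      · rcases Sym2.mem_iff.1 hxf with rfl | rfl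
        · exact hu e he1 hxe
        · exact hv e he1 hxe
      · exact h.2 e he1 f hf1 hef x hxe hxf

lemma ins_insert {M : Finset (Sym2 V)} {B B' : Finset V} (h : Ins M B) (hB : B ⊆ B') {u v : V}
    (hu : u ∈ B') (hv : v ∈ B') : Ins (insert s(u, v) M) B' := by
  intro e he x hx
  rcases Finset.mem_insert.1 he with rfl | he
  · rcases Sym2.mem_iff.1 hx with rfl | rfl
    · exact hu
    · exact hv
  · exact hB (h e he x hx)

lemma Mt.add {B B' : Finset V} {k : ℕ} (h : Mt G B k) (hB : B ⊆ B') {u v : V}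
    (huv : G.Adj u v) (hu : u ∉ B) (hv : v ∉ B) (hu' : u ∈ B') (hv' : v ∈ B') :
    Mt G B' (k + 1) := by
  obtain ⟨M, h1, h2, h3⟩ := h
  obtain ⟨h4, h5⟩ := isMatchingSet_insert h1 huv (fun e he h => hu (h2 e he _ h))
    (fun e he h => hv (h2 e he _ h))
  exact ⟨_, h4, ins_insert h2 hB hu' hv', by rw [Finset.card_insert_of_notMem h5, h3]⟩

lemma Mt.erase {B : Finset V} {k : ℕ} (h : Mt G B (k + 1)) (u : V) : Mt G (B.erase u) k := by
  obtain ⟨M, h1, h2, h3⟩ := h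
  have hc : (M.filter fun e => u ∈ e).card ≤ 1 := by
    rw [Finset.card_le_one]
    intro e he f hf
    rw [Finset.mem_filter] at he hf
    by_contra hef
    exact h1.2 e he.1 f hf.1 hef u he.2 hf.2
  have hs := Finset.card_filter_add_card_filter_not (s := M) (fun e => u ∈ e)
  obtain ⟨N, hN, hNc⟩ := Finset.exists_subset_card_eq (s := M.filter fun e => ¬ u ∈ e) (n := k)
    (by omega)
  refine ⟨N, isMatchingSet_subset h1 (hN.trans (Finset.filter_subset _ _)), ?_, hNc⟩
  intro e he v hv
  have := Finset.mem_filter.1 (hN he)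
  refine Finset.mem_erase.2 ⟨?_, h2 e this.1 v hv⟩
  rintro rfl
  exact this.2 hv

lemma Mt.isol {B : Finset V} {k : ℕ} (h : Mt G B k) {u : V} (hu : ∀ w ∈ B, ¬ G.Adj u w) :
    Mt G (B.erase u) k := by
  obtain ⟨M, h1, h2, h3⟩ := h
  refine ⟨M, h1, fun e he v hv => Finset.mem_erase.2 ⟨?_, h2 e he v hv⟩, h3⟩
  rintro rfl
  obtain ⟨w, rfl⟩ := Sym2.mem_iff_exists.1 hv
  exact hu w (h2 _ he w (by simp)) (h1.1 _ he)

/-- admissibility in terms of colourings -/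
def Adm (G : SimpleGraph V) (k : ℕ) (M : Finset (Sym2 V)) : Prop :=
  IsMatchingSet G M ∧ ∃ c : Sym2 V → ℕ,
    (∀ e ∈ M, ∀ f ∈ M, c e ≠ c f → IsGap G e f) ∧ M.card + 1 ≤ (M.image c).card + k

lemma Adm.mono {k k' : ℕ} {M : Finset (Sym2 V)} (h : Adm G k M) (hk : k ≤ k') : Adm G k' M := by
  obtain ⟨h1, c, h2, h3⟩ := h
  exact ⟨h1, c, h2, by omega⟩

lemma IsGap.symm' {e f : Sym2 V} (h : IsGap G e f) : IsGap G f e :=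
  ⟨fun v hv hv' => h.1 v hv' hv, fun u v hu hv huv => h.2 v u hv hu huv.symm⟩

lemma isGap_of {u v : V} {f : Sym2 V} (hu : u ∉ f) (hv : v ∉ f)
    (hu' : ∀ x ∈ f, ¬ G.Adj u x) (hv' : ∀ x ∈ f, ¬ G.Adj v x) : IsGap G s(u, v) f := by
  refine ⟨fun x hx => ?_, fun x y hx hy => ?_⟩
  · rcases Sym2.mem_iff.1 hx with rfl | rfl
    · exact hu
    · exact hv
  · rcases Sym2.mem_iff.1 hx with rfl | rfl
    · exact hu' y hy
    · exact hv' y hy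

lemma Adm.add_fresh {k : ℕ} {M : Finset (Sym2 V)} (h : Adm G k M) {e : Sym2 V}
    (he : IsMatchingSet G (insert e M)) (heM : e ∉ M) (hg : ∀ f ∈ M, IsGap G e f) :
    Adm G k (insert e M) := by
  obtain ⟨h1, c, h2, h3⟩ := h
  obtain ⟨x, hx⟩ := Infinite.exists_notMem_finset (M.image c)
  have hc : ∀ f ∈ M, Function.update c e x f = c f := fun f hf =>
    Function.update_of_ne (by rintro rfl; exact heM hf) _ _
  refine ⟨he, Function.update c e x, ?_, ?_⟩
  · intro f hf g hg' hfg
    rcases Finset.mem_insert.1 hf with rfl | hf1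
    · rcases Finset.mem_insert.1 hg' with rfl | hg1
      · exact absurd rfl hfg
      · exact hg g hg1
    · rcases Finset.mem_insert.1 hg' with rfl | hg1
      · exact IsGap.symm' (hg f hf1)
      · rw [hc f hf1, hc g hg1] at hfg
        exact h2 f hf1 g hg1 hfg
  · rw [Finset.card_insert_of_notMem heM, Finset.image_insert, Function.update_self,
      Finset.image_congr (g := c) hc, Finset.card_insert_of_notMem hx]
    omega

lemma Adm.add_same {k : ℕ} {M : Finset (Sym2 V)} (h : Adm G k M) {e f : Sym2 V}
    (he : IsMatchingSet G (insert e M)) (heM : e ∉ M) (hf : f ∈ M)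
    (hg : ∀ g ∈ M, g ≠ f → IsGap G e g) :
    Adm G (k + 1) (insert e M) := by
  obtain ⟨h1, c, h2, h3⟩ := h
  have hc : ∀ g ∈ M, Function.update c e (c f) g = c g := fun g hgM =>
    Function.update_of_ne (by rintro rfl; exact heM hgM) _ _
  refine ⟨he, Function.update c e (c f), ?_, ?_⟩
  · intro a ha b hb hab
    rcases Finset.mem_insert.1 ha with rfl | ha1
    · rcases Finset.mem_insert.1 hb with rfl | hb1
      · exact absurd rfl hab
      · rw [hc b hb1, Function.update_self] at hab
        exact hg b hb1 (by rintro rfl; exact hab rfl)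
    · rcases Finset.mem_insert.1 hb with rfl | hb1
      · rw [hc a ha1, Function.update_self] at hab
        exact IsGap.symm' (hg a ha1 (by rintro rfl; exact hab rfl))
      · rw [hc a ha1, hc b hb1] at hab
        exact h2 a ha1 b hb1 hab
  · rw [Finset.card_insert_of_notMem heM, Finset.image_insert, Function.update_self,
      Finset.image_congr (g := c) hc, Finset.insert_eq_of_mem (Finset.mem_image_of_mem _ hf)]
    omega

/-- all `k`-admissible matchings inside `W` have at most `a` edges -/
def HB (G : SimpleGraph V) (W : Finset V) (k a : ℕ) : Prop :=
  ∀ M, Adm G k M → Ins M W → M.card ≤ a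

lemma HB.anti {W W' : Finset V} {k a : ℕ} (h : HB G W k a) (hW : W' ⊆ W) : HB G W' k a :=
  fun M hM hI => h M hM fun e he v hv => hW (hI e he v hv)

lemma HB.anti_k {W : Finset V} {k k' a : ℕ} (h : HB G W k a) (hk : k' ≤ k) : HB G W k' a :=
  fun M hM hI => h M (hM.mono hk) hI

lemma HB.fresh {W T : Finset V} {k a : ℕ} (h : HB G W k (a + 1)) (hT : T ⊆ W) {u v : V}
    (huW : u ∈ W) (hvW : v ∈ W) (huT : u ∉ T) (hvT : v ∉ T) (huv : G.Adj u v)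
    (hu : ∀ z ∈ T, ¬ G.Adj u z) (hv : ∀ z ∈ T, ¬ G.Adj v z) : HB G T k a := by
  intro M hM hI
  obtain ⟨h4, h5⟩ := isMatchingSet_insert hM.1 huv (fun e he h => huT (hI e he _ h))
    (fun e he h => hvT (hI e he _ h))
  have := h _ (hM.add_fresh h4 h5 fun f hf => isGap_of (fun h => huT (hI f hf _ h))
    (fun h => hvT (hI f hf _ h)) (fun x hx => hu x (hI f hf x hx))
    (fun x hx => hv x (hI f hf x hx))) (ins_insert hI hT huW hvW)
  rw [Finset.card_insert_of_notMem h5] at this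
  omega

lemma HB.same {W T : Finset V} {k a : ℕ} (h : HB G W (k + 1) (a + 1)) (hT : T ⊆ W) {u v w : V}
    (huW : u ∈ W) (hvW : v ∈ W) (huT : u ∉ T) (hvT : v ∉ T) (huv : G.Adj u v)
    (hu : ∀ z ∈ T, G.Adj u z → (∀ t ∈ T, ¬ G.Adj z t) ∨ z = w) (hv : ∀ z ∈ T, ¬ G.Adj v z) : HB G T k a := by
  intro M hM hI
  obtain ⟨h4, h5⟩ := isMatchingSet_insert hM.1 huv (fun e he h => huT (hI e he _ h))
    (fun e he h => hvT (hI e he _ h))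
  have hgap : ∀ g ∈ M, w ∉ g → IsGap G s(u, v) g := fun f hf hw =>
    isGap_of (fun h => huT (hI f hf _ h))
      (fun h => hvT (hI f hf _ h))
      (fun x hx hux => by
        rcases hu x (hI f hf x hx) hux with h | h
        · obtain ⟨y, rfl⟩ := Sym2.mem_iff_exists.1 hx
          exact h y (hI _ hf y (by simp)) (hM.1.1 _ hf)
        · exact hw (h ▸ hx))
      (fun x hx => hv x (hI f hf x hx))
  have hA : Adm G (k + 1) (insert s(u, v) M) := by
    by_cases hw : ∃ f ∈ M, w ∈ f
    · obtain ⟨f, hf, hwf⟩ := hw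
      exact hM.add_same h4 h5 hf fun g hg hgf => hgap g hg (hM.1.2 f hf g hg hgf.symm w hwf)
    · push Not at hw
      exact (hM.add_fresh h4 h5 fun f hf => hgap f hf (hw f hf)).mono (by omega)
  have := h _ hA (ins_insert hI hT huW hvW)
  rw [Finset.card_insert_of_notMem h5] at this
  omega

end comb
end SqP

namespace SqP
section upper
variable {K : Type*} [Field K] {n : ℕ} {G : SimpleGraph (Fin n)}

lemma up_link (u : Fin n) (T : Finset (Fin n)) (k : ℕ) :
    Up fun A => Mt G (insert u (A ∩ T)) k :=
  fun _ _ h hA => hA.mono (Finset.insert_subset_insert _ (Finset.inter_subset_inter_right h))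

lemma up_base (T : Finset (Fin n)) (k : ℕ) : Up fun A => Mt G (A ∩ T) k :=
  fun _ _ h hA => hA.mono (Finset.inter_subset_inter_right h)

/-- the induction hypothesis -/
def IHyp (K : Type*) [Field K] (G : SimpleGraph (Fin n)) (N : ℕ) : Prop :=
  ∀ W : Finset (Fin n), W.card < N → ∀ k a, 1 ≤ k → HB G W k a →
    RegLE (mI K fun A => Mt G (A ∩ W) k) (a + k)

lemma regLE_congr {Q Q' : Finset (Fin n) → Prop} (h : ∀ A, Q A ↔ Q' A) {r : ℕ}
    (hr : RegLE (mI K Q) r) : RegLE (mI K Q') r := by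
  have : Q = Q' := funext fun A => propext (h A)
  rwa [← this]

lemma IHyp.pred {N : ℕ} (ih : IHyp K G N) {W : Finset (Fin n)} (hW : W.card < N) {k a : ℕ}
    (h : HB G W k a) :
    RegLE (mI K fun A => Mt G (A ∩ W) k) (a + k) := by
  rcases Nat.eq_zero_or_pos k with rfl | hk
  · exact regLE_of_empty (mt_zero _) _
  · exact ih W hW k a hk h

/-- linking a pair `u, l` where `l` has only the neighbour `u` -/
lemma mt_pair {u l : Fin n} {B : Finset (Fin n)} {k : ℕ} (hul : G.Adj u l) (hu : u ∉ B)
    (hl : l ∉ B) (h : ∀ z ∈ B, ¬ G.Adj l z) :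
    Mt G B k ↔ Mt G (insert u (insert l B)) (k + 1) := by
  constructor
  · intro hB
    exact hB.add (fun x hx => by simp [hx]) hul hu hl (by simp) (by simp)
  · intro hB
    refine ((hB.erase u).isol (u := l) ?_).mono ?_
    · intro w hw hlw
      simp only [Finset.mem_erase, Finset.mem_insert] at hw
      rcases hw with ⟨h1, h2 | h2 | h2⟩
      · exact h1 h2
      · exact hlw.ne h2.symm
      · exact h w h2 hlw
    · intro x hx
      simp only [Finset.mem_erase, Finset.mem_insert] at hx
      tauto

lemma mt_single {u : Fin n} {B : Finset (Fin n)} {k : ℕ} (h : ∀ z ∈ B, ¬ G.Adj u z) :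
    Mt G B k ↔ Mt G (insert u B) k := by
  constructor
  · intro hB
    exact hB.mono (Finset.subset_insert _ _)
  · intro hB
    refine (hB.isol (u := u) ?_).mono ?_
    · intro w hw huw
      rcases Finset.mem_insert.1 hw with rfl | hw
      · exact huw.ne rfl
      · exact h w hw huw
    · intro x hx
      simp only [Finset.mem_erase, Finset.mem_insert] at hx
      tauto

lemma link_aux {W : Finset (Fin n)} (ih : IHyp K G W.card) {u v w : Fin n} {k a : ℕ}
    (huW : u ∈ W) (hvW : v ∈ W) (huv : G.Adj u v) (hv : ∀ z ∈ W, G.Adj v z → z = u)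
    (hu : ∀ z ∈ W, G.Adj u z → (∀ t ∈ W, G.Adj z t → t = u) ∨ z = w)
    (hHB : HB G W (k + 1) (a + 1)) :
    ∀ N, ∀ T ⊆ W.erase u, T.card ≤ N →
      RegLE (mI K fun A => Mt G (insert u (A ∩ T)) (k + 1)) (a + k + 1) := by
  intro N
  induction N with
  | zero => 
    intro T hT hTc
    have : T = ∅ := by simpa using hTc
    subst this
    refine regLE_of_never (fun A hA => ?_) _
    have := hA.erase u
    obtain ⟨M, h1, h2, h3⟩ := hA
    have : M.Nonempty := by rw [← Finset.card_pos]; omega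
    obtain ⟨e, he⟩ := this
    induction e with
    | _ x y =>
      have h4 := h2 _ he x (by simp)
      have h5 := h2 _ he y (by simp)
      have h6 : G.Adj x y := h1.1 _ he
      simp at h4 h5
      subst h4 h5
      exact h6.ne rfl
  | succ N ihN =>
    intro T hT hTc
    have hTW : T ⊆ W := hT.trans (Finset.erase_subset _ _)
    have huT : u ∉ T := fun h => by simpa using hT h
    have hcard : T.card < W.card :=
      (Finset.card_le_card hT).trans_lt (Finset.card_erase_lt_of_mem huW)
    have hcard' : ∀ x, (T.erase x).card < W.card := fun x =>
      (Finset.card_le_card (Finset.erase_subset _ _)).trans_lt hcard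
    by_cases hl : ∃ l ∈ T, G.Adj u l ∧ ∀ t ∈ W, G.Adj l t → t = u
    · obtain ⟨l, hlT, hul, hlt⟩ := hl
      refine regLE_split (up_link u T (k + 1)) l ?_ ?_
      · refine regLE_congr (fun A => ?_) (ihN (T.erase l)
          ((Finset.erase_subset _ _).trans hT) ?_)
        · rw [Finset.inter_erase, Finset.erase_inter]
        · rw [Finset.card_erase_of_mem hlT]; omega
      · have h1 : HB G (T.erase l) k a :=
          hHB.same (w := w) (u := u) (v := l) ((Finset.erase_subset _ _).trans hTW) huW
            (hTW hlT) (by simp [huT]) (by simp) hul ?_ ?_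
        · refine regLE_congr (fun A => ?_) (ih.pred (hcard' l) h1)
          rw [Finset.insert_inter_of_mem hlT, mt_pair (u := u) (l := l) hul]
          · have : insert l (A ∩ T.erase l) = insert l (A ∩ T) := by
              ext x; by_cases hx : x = l <;> simp [hx]
            rw [this]
          · simp [huT]
          · simp
          · intro z hz hlz
            have hzT := Finset.mem_of_mem_erase (Finset.mem_inter.1 hz).2
            exact huT (hlt z (hTW hzT) hlz ▸ hzT)
        · intro z hz huz
          have hzT := Finset.mem_of_mem_erase hz
          refine (hu z (hTW hzT) huz).imp_left fun h t ht hzt => huT ?_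
          have htT := Finset.mem_of_mem_erase ht
          exact h t (hTW htT) hzt ▸ htT
        · intro z hz hlz
          have hzT := Finset.mem_of_mem_erase hz
          exact huT (hlt z (hTW hzT) hlz ▸ hzT)
    · push Not at hl
      have hnb : ∀ z ∈ T, G.Adj u z → z = w := by
        intro z hz huz
        rcases hu z (hTW hz) huz with h | h
        · obtain ⟨t, ht, h1, h2⟩ := hl z hz huz
          exact absurd (h t ht h1) h2
        · exact h
      have hvT : v ∉ T := fun h => by
        obtain ⟨t, ht, h1, h2⟩ := hl v h huv
        exact h2 (hv t ht h1)
      have hvn : ∀ z ∈ T, ¬ G.Adj v z := fun z hz hvz => huT (hv z (hTW hz) hvz ▸ hz)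
      by_cases hw : w ∈ T ∧ G.Adj u w
      · obtain ⟨hwT, huw⟩ := hw
        have hun : ∀ z ∈ T.erase w, ¬ G.Adj u z := fun z hz huz =>
          (Finset.mem_erase.1 hz).1 (hnb z (Finset.mem_erase.1 hz).2 huz)
        have h1 : HB G (T.erase w) (k + 1) a :=
          hHB.fresh ((Finset.erase_subset _ _).trans hTW) huW hvW (by simp [huT]) (by simp [hvT])
            huv hun fun z hz => hvn z (Finset.mem_of_mem_erase hz)
        refine regLE_split (up_link u T (k + 1)) w ?_ ?_
        · refine regLE_congr (fun A => ?_) (ih.pred (k := k + 1) (a := a) (hcard' w) h1)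
          rw [mt_single (u := u), Finset.inter_erase, Finset.erase_inter]
          intro z hz
          exact hun z (Finset.mem_inter.1 hz).2
        · refine regLE_congr (fun A => ?_) (ih.pred (hcard' w) (h1.anti_k (Nat.le_succ k)))
          rw [Finset.insert_inter_of_mem hwT, mt_pair (u := w) (l := u) huw.symm]
          · have : insert w (insert u (A ∩ T.erase w)) = insert u (insert w (A ∩ T)) := by
              ext x; by_cases hx : x = w <;> by_cases hx' : x = u <;> simp [hx, hx']
            rw [this]
          · simp
          · simp [huT]
          · intro z hz
            exact hun z (Finset.mem_inter.1 hz).2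
      · have hun : ∀ z ∈ T, ¬ G.Adj u z := fun z hz huz =>
          hw ⟨hnb z hz huz ▸ hz, hnb z hz huz ▸ huz⟩
        have h1 : HB G T (k + 1) a := hHB.fresh hTW huW hvW huT hvT huv hun hvn
        refine regLE_congr (fun A => ?_) (ih.pred (k := k + 1) (a := a) hcard h1)
        rw [mt_single (u := u)]
        intro z hz
        exact hun z (Finset.mem_inter.1 hz).2

theorem upper_main (hG : G.IsAcyclic) : ∀ N, IHyp K G N := by
  intro N
  induction N with
  | zero => intro W hW; omega
  | succ N ihN =>
    intro W hW k a hk hHB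
    rcases Nat.lt_or_ge W.card N with h | h
    · exact ihN W h k a hk hHB
    have hWN : W.card = N := by omega
    subst hWN
    by_cases hE : ∃ x ∈ W, ∃ y ∈ W, G.Adj x y
    · obtain ⟨x, hx, y, hy, hxy⟩ := hE
      obtain ⟨u, hu, v, hv, w, huv, h1, h2⟩ := exists_good hG W hx hy hxy
      obtain ⟨k, rfl⟩ : ∃ k', k = k' + 1 := ⟨k - 1, by omega⟩
      have ha : 1 ≤ a := by
        have h0 : Adm G (k + 1) (∅ : Finset (Sym2 (Fin n))) :=
          ⟨⟨by simp, by simp⟩, fun _ => 0, by simp, by simp⟩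
        obtain ⟨h4, h5⟩ := isMatchingSet_insert h0.1 huv (by simp) (by simp)
        have := hHB _ (h0.add_fresh h4 h5 (by simp))
          (ins_insert (B := ∅) (fun e he => by simp at he) (by simp) hu hv)
        simpa using this
      obtain ⟨a, rfl⟩ : ∃ a', a = a' + 1 := ⟨a - 1, by omega⟩
      have : a + 1 + (k + 1) = (a + k + 1) + 1 := by ring
      rw [this]
      refine regLE_split (up_base W (k + 1)) u ?_ ?_
      · rw [← this]
        refine regLE_congr (fun A => ?_) (ihN (W.erase u) (Finset.card_erase_lt_of_mem hu) (k + 1)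
          (a + 1) hk (hHB.anti (Finset.erase_subset _ _)))
        rw [Finset.inter_erase, Finset.erase_inter]
      · refine regLE_congr (fun A => ?_) (link_aux ihN hu hv huv h1 h2 hHB _ (W.erase u)
          subset_rfl le_rfl)
        have : insert u (A ∩ W.erase u) = insert u A ∩ W := by
          ext x; by_cases hx : x = u <;> simp [hx, hu]
        rw [this]
    · push Not at hE
      refine regLE_of_never (fun A hA => ?_) _
      obtain ⟨M, h1, h2, h3⟩ := hA
      have : M.Nonempty := by rw [← Finset.card_pos]; omega
      obtain ⟨e, he⟩ := this
      induction e with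
      | _ x y =>
        have h4 := (Finset.mem_inter.1 (h2 _ he x (by simp))).2
        have h5 := (Finset.mem_inter.1 (h2 _ he y (by simp))).2
        exact hE x h4 y h5 (h1.1 _ he)

lemma adm_isAdmissible {V : Type*} {G : SimpleGraph V} (hG : G.IsAcyclic) {k : ℕ}
    {M : Finset (Sym2 V)} (h : Adm G k M) : IsAdmissibleMatching G k M := by
  obtain ⟨h1, c, h2, h3⟩ := h
  refine ⟨h1, (M.image c).image fun i => M.filter fun e => c e = i, ?_, ?_, ?_, ?_, ?_, ?_⟩
  · simp only [Finset.mem_image]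
    rintro _ ⟨_, ⟨e, he, rfl⟩, rfl⟩
    exact ⟨e, by simp [he]⟩
  · simp only [Finset.mem_image]
    rintro _ ⟨_, ⟨e, he, rfl⟩, rfl⟩ _ ⟨_, ⟨f, hf, rfl⟩, rfl⟩ hne
    rw [Finset.disjoint_left]
    intro g hg hg'
    rw [Finset.mem_filter] at hg hg'
    exact hne (by rw [← hg.2, ← hg'.2])
  · ext e
    simp only [Finset.mem_biUnion, Finset.mem_image, id]
    constructor
    · rintro ⟨_, ⟨_, ⟨f, hf, rfl⟩, rfl⟩, he⟩
      exact (Finset.mem_filter.1 he).1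
    · intro he
      exact ⟨_, ⟨_, ⟨e, he, rfl⟩, rfl⟩, by simp [he]⟩
  · simp only [Finset.mem_image]
    rintro _ ⟨_, ⟨e, he, rfl⟩, rfl⟩ _ ⟨_, ⟨f, hf, rfl⟩, rfl⟩ hne g hg g' hg'
    rw [Finset.mem_filter] at hg hg'
    refine h2 g hg.1 g' hg'.1 fun h => hne ?_
    rw [← hg.2, ← hg'.2, h]
  · rw [Finset.card_image_of_injOn]
    · exact h3
    · intro i hi j hj hij
      obtain ⟨e, he, rfl⟩ := Finset.mem_image.1 hi
      have : e ∈ M.filter fun f => c f = c e := by simp [he]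
      simp only at hij
      rw [hij] at this
      exact (Finset.mem_filter.1 this).2
  · intro p _
    exact hG.induce _

lemma bddAbove_adm {V : Type*} [Fintype V] (G : SimpleGraph V) (k : ℕ) :
    BddAbove {m | ∃ M : Finset (Sym2 V), IsAdmissibleMatching G k M ∧ M.card = m} :=
  ⟨(Finset.univ : Finset (Sym2 V)).card, by
    rintro _ ⟨M, _, rfl⟩
    exact Finset.card_le_card (Finset.subset_univ _)⟩

lemma edgeIdealSqPow_eq (k : ℕ) :
    edgeIdealSqPow K G k = mI K fun A => Mt G (A ∩ Finset.univ) k := by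
  apply le_antisymm
  · refine Ideal.span_le.2 ?_
    rintro _ ⟨M, h1, h2, rfl⟩
    refine Ideal.subset_span ⟨_, ⟨M, h1, ?_, h2⟩, rfl⟩
    intro e he v hv
    simp only [Finset.mem_inter, Finset.mem_filter, Finset.mem_univ, true_and, and_true]
    exact ⟨e, he, hv⟩
  · refine Ideal.span_le.2 ?_
    rintro _ ⟨A, ⟨M, h1, h2, h3⟩, rfl⟩
    rw [← Finset.prod_sdiff (s₁ := Finset.univ.filter fun v => ∃ e ∈ M, v ∈ e) (s₂ := A)]
    · exact Ideal.mul_mem_left _ _ (Ideal.subset_span ⟨M, h1, h3, rfl⟩)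
    · intro v hv
      obtain ⟨e, he, hv⟩ := (Finset.mem_filter.1 hv).2
      exact (Finset.mem_inter.1 (h2 e he v hv)).1

theorem upper (hG : G.IsAcyclic) {k : ℕ} (hk : 1 ≤ k) :
    RegLE (edgeIdealSqPow K G k) (aim G k + k) := by
  rw [edgeIdealSqPow_eq]
  refine upper_main hG _ Finset.univ (Nat.lt_succ_self _) k _ hk ?_
  intro M hM _
  exact le_csSup (bddAbove_adm G k) ⟨M, adm_isAdmissible hG hM, rfl⟩

end upper
end SqP

namespace SqP
section koszul

/-- index set of the Koszul complex -/
def Cube : ℕ → Type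
  | 0 => Unit
  | t + 1 => Bool × Cube t

/-- the Koszul differential -/
def kz {S : Type*} [CommRing S] {N : Type*} [AddCommGroup N] [Module S N] :
    (t : ℕ) → (ℕ → S) → (Cube t → N) → Cube t → N
  | 0, _, _, _ => 0
  | t + 1, y, c, (true, τ) => -(kz t (fun i => y (i + 1)) (fun σ => c (true, σ)) τ)
  | t + 1, y, c, (false, τ) => kz t (fun i => y (i + 1)) (fun σ => c (false, σ)) τ +
      y 0 • c (true, τ)

/-- the empty subset -/
def cbot : (t : ℕ) → Cube t
  | 0 => ()
  | t + 1 => (false, cbot t)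

/-- the full subset -/
def ctop : (t : ℕ) → Cube t
  | 0 => ()
  | t + 1 => (true, ctop t)

/-- number of missing elements -/
def nf : (t : ℕ) → Cube t → ℕ
  | 0, _ => 0
  | t + 1, (true, τ) => nf t τ
  | t + 1, (false, τ) => nf t τ + 1

/-- chain concentrated in degree zero -/
def cone0 {N : Type*} [Zero N] (n : N) : (t : ℕ) → Cube t → N
  | 0, _ => n
  | _ + 1, (true, _) => 0
  | t + 1, (false, τ) => cone0 n t τ

/-- chain concentrated in top degree -/
def ctop1 {N : Type*} [Zero N] (n : N) : (t : ℕ) → Cube t → N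
  | 0, _ => n
  | _ + 1, (false, _) => 0
  | t + 1, (true, τ) => ctop1 n t τ

lemma nf_le : ∀ (t : ℕ) (τ : Cube t), nf t τ ≤ t
  | 0, _ => le_rfl
  | t + 1, (true, τ) => (nf_le t τ).trans (Nat.le_succ t)
  | t + 1, (false, τ) => Nat.succ_le_succ (nf_le t τ)

lemma nf_cbot : ∀ (t : ℕ), nf t (cbot t) = t
  | 0 => rfl
  | t + 1 => congrArg (· + 1) (nf_cbot t)

lemma cone0_bot {N : Type*} [Zero N] (n : N) : ∀ t, cone0 n t (cbot t) = n
  | 0 => rfl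
  | t + 1 => cone0_bot n t

lemma ctop1_top {N : Type*} [Zero N] (n : N) : ∀ t, ctop1 n t (ctop t) = n
  | 0 => rfl
  | t + 1 => ctop1_top n t

lemma ctop1_map {N N' : Type*} [Zero N] [Zero N'] (f : N → N') (hf : f 0 = 0) (n : N) :
    ∀ t τ, f (ctop1 n t τ) = ctop1 (f n) t τ
  | 0, _ => rfl
  | _ + 1, (false, _) => hf
  | t + 1, (true, τ) => ctop1_map f hf n t τ

lemma ctop1_of_pos {N : Type*} [Zero N] (n : N) : ∀ t τ, nf t τ ≠ 0 → ctop1 n t τ = 0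
  | 0, _, h => absurd rfl h
  | _ + 1, (false, _), _ => rfl
  | t + 1, (true, τ), h => ctop1_of_pos n t τ h

variable {S : Type*} [CommRing S] {N : Type*} [AddCommGroup N] [Module S N]

lemma kz_hom {R : Type*} [CommRing R] {N' : Type*} [AddCommGroup N'] [Module R N']
    (f : N →+ N') : ∀ (t : ℕ) (y : ℕ → S) (y' : ℕ → R) (_ : ∀ i n, f (y i • n) = y' i • f n)
      (c : Cube t → N) (τ : Cube t), f (kz t y c τ) = kz t y' (fun σ => f (c σ)) τ
  | 0, _, _, _, _, _ => map_zero f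
  | t + 1, y, y', h, c, (true, τ) => by
    show f (-_) = -_
    rw [map_neg, kz_hom f t _ (fun i => y' (i + 1)) (fun i => h (i + 1))]
  | t + 1, y, y', h, c, (false, τ) => by
    show f (_ + _) = _ + _
    rw [map_add, kz_hom f t _ (fun i => y' (i + 1)) (fun i => h (i + 1)), h]

lemma kz_zero : ∀ (t : ℕ) (y : ℕ → S) (τ : Cube t), kz t y (fun _ => (0 : N)) τ = 0
  | 0, _, _ => rfl
  | t + 1, y, (true, τ) => by
    show -_ = _
    rw [kz_zero, neg_zero]
  | t + 1, y, (false, τ) => by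
    show _ + _ = _
    rw [kz_zero, smul_zero, add_zero]

lemma kz_add : ∀ (t : ℕ) (y : ℕ → S) (c c' : Cube t → N) (τ : Cube t),
    kz t y (fun σ => c σ + c' σ) τ = kz t y c τ + kz t y c' τ
  | 0, _, _, _, _ => (add_zero 0).symm
  | t + 1, y, c, c', (true, τ) => by
    show -_ = -_ + -_
    rw [kz_add, neg_add]
  | t + 1, y, c, c', (false, τ) => by
    show _ + _ = _ + _ + (_ + _)
    rw [kz_add, smul_add]
    abel

lemma kz_neg (t : ℕ) (y : ℕ → S) (c : Cube t → N) (τ : Cube t) :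
    kz t y (fun σ => - c σ) τ = - kz t y c τ :=
  (kz_hom (-(AddMonoidHom.id N)) t y y (by simp) c τ).symm

lemma kz_sub (t : ℕ) (y : ℕ → S) (c c' : Cube t → N) (τ : Cube t) :
    kz t y (fun σ => c σ - c' σ) τ = kz t y c τ - kz t y c' τ := by
  simp only [sub_eq_add_neg, kz_add, kz_neg]

lemma kz_smul (t : ℕ) (y : ℕ → S) (a : S) (c : Cube t → N) (τ : Cube t) :
    kz t y (fun σ => a • c σ) τ = a • kz t y c τ :=
  (kz_hom (DistribSMul.toAddMonoidHom N a) t y y (fun i n => by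
    show a • y i • n = y i • a • n
    rw [smul_comm]) c τ).symm

lemma kz_lin {N' : Type*} [AddCommGroup N'] [Module S N'] (f : N →ₗ[S] N') (t : ℕ) (y : ℕ → S)
    (c : Cube t → N) (τ : Cube t) : kz t y (fun σ => f (c σ)) τ = f (kz t y c τ) :=
  (kz_hom f.toAddMonoidHom t y y (by simp) c τ).symm

lemma kz_kz : ∀ (t : ℕ) (y : ℕ → S) (c : Cube t → N) (τ : Cube t), kz t y (kz t y c) τ = 0
  | 0, _, _, _ => rfl
  | t + 1, y, c, (true, τ) => by
    show -(kz t _ (fun σ => -(kz t _ _ σ)) τ) = 0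
    rw [kz_neg, neg_neg]
    exact kz_kz t _ _ τ
  | t + 1, y, c, (false, τ) => by
    show kz t _ (fun σ => kz t _ _ σ + y 0 • _) τ + y 0 • -(kz t _ _ τ) = 0
    rw [kz_add, kz_smul, smul_neg, add_neg_cancel_right]
    exact kz_kz t _ _ τ

lemma kz_cone0 (n : N) : ∀ (t : ℕ) (y : ℕ → S) (τ : Cube t), kz t y (cone0 n t) τ = 0
  | 0, _, _ => rfl
  | t + 1, y, (true, τ) => by
    show -(kz t _ (fun _ => 0) τ) = 0
    rw [kz_zero, neg_zero]
  | t + 1, y, (false, τ) => by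
    show kz t _ (cone0 n t) τ + y 0 • (0 : N) = 0
    rw [kz_cone0, smul_zero, add_zero]

/-- the ideal generated by the sequence -/
def kI (t : ℕ) (y : ℕ → S) : Ideal S := Ideal.span (y '' {i | i < t})

lemma kI_succ (t : ℕ) (y : ℕ → S) :
    kI (t + 1) y = Ideal.span {y 0} ⊔ kI t (fun i => y (i + 1)) := by
  rw [kI, kI, ← Ideal.span_union]
  congr 1
  ext a
  constructor
  · rintro ⟨i, hi, rfl⟩
    cases i with
    | zero => exact Or.inl rfl
    | succ i => exact Or.inr ⟨i, Nat.lt_of_succ_lt_succ hi, rfl⟩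
  · rintro (h | ⟨i, hi, rfl⟩)
    · rw [Set.mem_singleton_iff.1 h]
      exact ⟨0, Nat.succ_pos _, rfl⟩
    · exact ⟨i + 1, Nat.succ_lt_succ hi, rfl⟩

/-- regular sequences, last elements first -/
def RegS : (t : ℕ) → (ℕ → S) → Prop
  | 0, _ => True
  | t + 1, y => (∀ a, y 0 * a ∈ kI t (fun i => y (i + 1)) → a ∈ kI t (fun i => y (i + 1))) ∧
      RegS t (fun i => y (i + 1))

lemma kz_bot_mem : ∀ (t : ℕ) (y : ℕ → S) (c : Cube t → S), kz t y c (cbot t) ∈ kI t y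
  | 0, _, _ => zero_mem _
  | t + 1, y, c => by
    show _ + y 0 * _ ∈ _
    rw [kI_succ]
    exact add_mem (Ideal.mem_sup_right (kz_bot_mem t _ _))
      (Ideal.mem_sup_left (Ideal.mul_mem_right _ _ (Ideal.mem_span_singleton_self _)))

lemma kz_exact : ∀ (t : ℕ) (y : ℕ → S) (_ : RegS t y) (c : Cube t → S)
    (_ : ∀ τ, kz t y c τ = 0) (_ : c (cbot t) ∈ kI t y), ∃ w, ∀ τ, kz t y w τ = c τ
  | 0, y, _, c, _, h => by
    refine ⟨c, fun τ => ?_⟩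
    rw [kI] at h
    simp at h
    exact h.symm
  | t + 1, y, hy, c, hc, h => by
    let y' : ℕ → S := fun i => y (i + 1)
    let a : Cube t → S := fun σ => c (false, σ)
    let b : Cube t → S := fun σ => c (true, σ)
    have hb : ∀ τ, kz t y' b τ = 0 := fun τ => neg_eq_zero.1 (hc (true, τ))
    have ha : ∀ τ, kz t y' a τ + y 0 • b τ = 0 := fun τ => hc (false, τ)
    have hbb : b (cbot t) ∈ kI t y' := by
      refine hy.1 _ ?_
      have := ha (cbot t)
      rw [smul_eq_mul, add_comm, add_eq_zero_iff_eq_neg] at this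
      rw [this]
      exact neg_mem (kz_bot_mem _ _ _)
    obtain ⟨b', hb'⟩ := kz_exact t y' hy.2 b hb hbb
    rw [kI_succ] at h
    obtain ⟨x, hx, m', hm', hxm⟩ := Submodule.mem_sup.1 h
    obtain ⟨m, rfl⟩ := Ideal.mem_span_singleton'.1 hx
    let b2 : Cube t → S := fun τ => b' τ + cone0 (-m - b' (cbot t)) t τ
    have hb2 : ∀ τ, kz t y' b2 τ = b τ := fun τ => by
      rw [kz_add, kz_cone0, hb', add_zero]
    obtain ⟨a', ha'⟩ := kz_exact t y' hy.2 (fun τ => a τ + y 0 • b2 τ) (fun τ => by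
      rw [kz_add, kz_smul, hb2, ha]) (by
      have h1 : a (cbot t) = m * y 0 + m' := hxm.symm
      have : a (cbot t) + y 0 • b2 (cbot t) = m' := by
        simp only [b2, cone0_bot, h1, smul_eq_mul]
        ring
      rw [this]
      exact hm')
    refine ⟨fun τ => match τ with
      | (true, τ) => - b2 τ
      | (false, τ) => a' τ, ?_⟩
    rintro ⟨_ | _, τ⟩
    · show kz t y' a' τ + y 0 • - b2 τ = a τ
      rw [ha', smul_neg, add_neg_cancel_right]
    · show -(kz t y' (fun σ => - b2 σ) τ) = b τ
      rw [kz_neg, neg_neg, hb2]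

lemma kz_top [NoZeroDivisors S] : ∀ (t : ℕ) (y : ℕ → S) (_ : ∀ i ≤ t, y i ≠ 0)
    (c : Cube (t + 1) → S) (_ : ∀ τ, kz (t + 1) y c τ = 0), c (ctop (t + 1)) = 0
  | 0, y, hy, c, hc => by
    have : (0 : S) + y 0 * c (true, ()) = 0 := hc (false, ())
    rw [zero_add] at this
    exact (mul_eq_zero.1 this).resolve_left (hy 0 le_rfl)
  | t + 1, y, hy, c, hc =>
    kz_top t (fun i => y (i + 1)) (fun i hi => hy _ (Nat.succ_le_succ hi))
      (fun σ => c (true, σ)) (fun τ => neg_eq_zero.1 (hc (true, τ)))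

lemma kz_supp : ∀ (t : ℕ) (y : ℕ → S) (j : ℕ) (c : Cube t → N) (_ : ∀ τ, nf t τ < j → c τ = 0)
    (τ : Cube t), nf t τ < j + 1 → kz t y c τ = 0
  | 0, _, _, _, _, _, _ => rfl
  | t + 1, y, j, c, hc, (true, τ), h => by
    show -_ = _
    rw [kz_supp t _ j _ (fun σ hσ => hc (true, σ) hσ) τ h, neg_zero]
  | t + 1, y, j, c, hc, (false, τ), h => by
    have h1 : nf t τ < j := Nat.lt_of_succ_lt_succ h
    show _ + _ = _
    rw [hc (true, τ) h1, smul_zero, add_zero]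
    cases j with
    | zero => omega
    | succ j =>
      exact kz_supp t _ j _ (fun σ hσ => hc (false, σ) (Nat.succ_lt_succ hσ)) τ h1

end koszul

section zig
variable {K : Type*} [Field K] {n : ℕ}

lemma kz_homVec {ι : Type} {dg : ι → ℕ} : ∀ (t : ℕ) (E : ℕ)
    (y : ℕ → MvPolynomial (Fin n) K)
    (_ : ∀ i, (y i).IsHomogeneous 1) (c : Cube t → ι → MvPolynomial (Fin n) K)
    (_ : ∀ τ, HomVec dg (E + nf t τ) (c τ)) (τ : Cube t), HomVec dg (E + nf t τ) (kz t y c τ)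
  | 0, _, _, _, _, _, _ => HomVec.zero _ _
  | t + 1, E, y, hy, c, hc, (true, τ) =>
    (kz_homVec t E _ (fun i => hy _) _ (fun σ => hc (true, σ)) τ).neg
  | t + 1, E, y, hy, c, hc, (false, τ) => by
    have h1 := (hc (true, τ)).smul (hy 0)
    have h2 := kz_homVec (dg := dg) t (E + 1) _ (fun i => hy (i + 1))
      (fun σ => c (false, σ)) (fun σ => by
      have := hc (false, σ)
      have h : E + nf (t + 1) (false, σ) = E + 1 + nf t σ := by
        show E + (nf t σ + 1) = _
        ring
      rwa [h] at this) τ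
    have e1 : E + nf (t + 1) (false, τ) = E + 1 + nf t τ := by
      show E + (nf t τ + 1) = _
      ring
    have e2 : 1 + (E + nf (t + 1) (true, τ)) = E + 1 + nf t τ := by
      show 1 + (E + nf t τ) = _
      ring
    rw [e2] at h1
    rw [e1]
    exact h2.add h1

variable {R : Type*} [CommRing R] (φ : MvPolynomial (Fin n) K →+* R)

/-- base change of a linear map -/
def bc {A B : Type} [Fintype A]
    (f : (A → MvPolynomial (Fin n) K) →ₗ[MvPolynomial (Fin n) K] (B → MvPolynomial (Fin n) K)) :
    (A → R) →ₗ[R] (B → R) :=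
  Fintype.linearCombination R (fun q p => φ (f (Pi.single q 1) p))

variable {A B C : Type} [Fintype A]

lemma bc_map (f : (A → MvPolynomial (Fin n) K) →ₗ[MvPolynomial (Fin n) K]
      (B → MvPolynomial (Fin n) K)) (v : A → MvPolynomial (Fin n) K) :
    bc φ f (fun q => φ (v q)) = fun p => φ (f v p) := by
  rw [map_eq_sum f v]
  funext p
  simp [bc, Fintype.linearCombination_apply]

lemma bc_comp [Fintype B] (f : (B → MvPolynomial (Fin n) K) →ₗ[MvPolynomial (Fin n) K]
      (C → MvPolynomial (Fin n) K)) (g : (A → MvPolynomial (Fin n) K) →ₗ[MvPolynomial (Fin n) K]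
      (B → MvPolynomial (Fin n) K)) (h : ∀ v, f (g v) = 0) (v : A → R) :
    bc φ f (bc φ g v) = 0 := by
  have : bc φ g v = ∑ q, v q • (fun p => φ (g (Pi.single q 1) p)) := by
    simp [bc, Fintype.linearCombination_apply]
  rw [this, map_sum]
  refine Finset.sum_eq_zero fun q _ => ?_
  rw [map_smul, bc_map, h]
  funext p
  simp

/-- the zigzag property -/
def Zig (t E : ℕ) (y : ℕ → MvPolynomial (Fin n) K) (dB : B → ℕ)
    (f : (A → MvPolynomial (Fin n) K) →ₗ[MvPolynomial (Fin n) K] (B → MvPolynomial (Fin n) K))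
    (j : ℕ) : Prop :=
  ∀ z : Cube t → B → MvPolynomial (Fin n) K, (∀ τ, kz t y z τ = 0) →
    (∀ τ, z τ ∈ LinearMap.range f) → (∀ τ, nf t τ < j → z τ = 0) →
    (∀ τ, HomVec dB (E + nf t τ) (z τ)) →
    ∃ w : Cube t → A → R, ∀ τ, (fun p => φ (z τ p)) = kz t (fun i => φ (y i)) (fun σ => bc φ f (w σ)) τ

lemma zig_base (t E : ℕ) (y : ℕ → MvPolynomial (Fin n) K) (dB : B → ℕ)
    (f : (A → MvPolynomial (Fin n) K) →ₗ[MvPolynomial (Fin n) K] (B → MvPolynomial (Fin n) K))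
    {j : ℕ} (hj : t < j) : Zig φ t E y dB f j := by
  intro z _ _ h _
  refine ⟨fun _ => 0, fun τ => ?_⟩
  rw [h τ ((nf_le t τ).trans_lt hj)]
  simp only [map_zero]
  rw [kz_zero]
  funext p
  simp

lemma kz_phi (t : ℕ) (y : ℕ → MvPolynomial (Fin n) K) (c : Cube t → B → MvPolynomial (Fin n) K)
    (τ : Cube t) : (fun p => φ (kz t y c τ p)) =
      kz t (fun i => φ (y i)) (fun σ p => φ (c σ p)) τ :=
  kz_hom (R := R) (N' := B → R) { toFun := fun v p => φ (v p)
                                  map_zero' := by funext p; simp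
                                  map_add' := fun v w => by funext p; simp } t y _
    (fun i v => by funext p; simp) c τ

lemma kz_exact_vec (t : ℕ) (y : ℕ → R) (hy : RegS t y) (c : Cube t → B → R)
    (hc : ∀ τ, kz t y c τ = 0) (h : ∀ p, c (cbot t) p ∈ kI t y) :
    ∃ w, ∀ τ, kz t y w τ = c τ := by
  have key : ∀ (c : Cube t → B → R) τ p, kz t y c τ p = kz t y (fun σ => c σ p) τ :=
    fun c τ p => (kz_lin (LinearMap.proj (R := R) (φ := fun _ : B => R) p) t y c τ).symm
  have : ∀ p, ∃ w, ∀ τ, kz t y w τ = c τ p := fun p =>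
    kz_exact t y hy (fun σ => c σ p) (fun τ => by rw [← key, hc]; rfl) (h p)
  choose w hw using this
  refine ⟨fun τ p => w p τ, fun τ => ?_⟩
  funext p
  rw [key, hw]

lemma zig_step {t E j : ℕ} {y : ℕ → MvPolynomial (Fin n) K} (hy : ∀ i, (y i).IsHomogeneous 1)
    (hreg : RegS t (fun i => φ (y i)))
    (hφ : ∀ (a : MvPolynomial (Fin n) K) d, 1 ≤ d → a.IsHomogeneous d →
      φ a ∈ kI t (fun i => φ (y i)))
    [Fintype C] {dA : A → ℕ} {dB : B → ℕ}
    {f : (A → MvPolynomial (Fin n) K) →ₗ[MvPolynomial (Fin n) K] (B → MvPolynomial (Fin n) K)}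
    {g : (C → MvPolynomial (Fin n) K) →ₗ[MvPolynomial (Fin n) K] (A → MvPolynomial (Fin n) K)}
    (hf : GrMap dA dB f) (hex : LinearMap.range g = LinearMap.ker f)
    (hZ : Zig φ t E y dA g (j + 1)) (hd : ∀ p, dA p < E + t) : Zig φ t E y dB f j := by
  intro z hz hzr hzs hzh
  have hfg : ∀ v, f (g v) = 0 := fun v => by
    have : g v ∈ LinearMap.ker f := by rw [← hex]; exact ⟨v, rfl⟩
    exact this
  have : ∀ τ, ∃ v, HomVec dA (E + nf t τ) v ∧ f v = z τ ∧ (nf t τ < j → v = 0) := by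
    intro τ
    by_cases h : nf t τ < j
    · exact ⟨0, HomVec.zero _ _, by rw [map_zero, hzs τ h], fun _ => rfl⟩
    · obtain ⟨v, h1, h2⟩ := exists_hom_lift hf (hzh τ) (hzr τ)
      exact ⟨v, h1, h2, fun h' => absurd h' h⟩
  choose v hv hfv hvs using this
  obtain ⟨w, hw⟩ := hZ (kz t y v) (kz_kz t y v) (fun τ => by
      rw [hex, LinearMap.mem_ker, ← kz_lin]
      have : (fun σ => f (v σ)) = z := funext hfv
      rw [this, hz]) (kz_supp t y j v hvs) (kz_homVec t E y hy v hv)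
  let c : Cube t → A → R := fun σ =>
    (fun q => φ (v σ q)) - (bc φ g (w σ) - cone0 (bc φ g (w (cbot t))) t σ)
  obtain ⟨w', hw'⟩ := kz_exact_vec t _ hreg c (fun τ => by
    rw [kz_sub, kz_sub, kz_cone0, ← hw, ← kz_phi, sub_zero, sub_self]) (fun p => by
    simp only [c, cone0_bot, sub_self, sub_zero]
    have := (hv (cbot t) p).1
    rw [nf_cbot] at this
    exact hφ _ _ (by have := hd p; omega) this)
  have hbc0 : ∀ τ, bc φ f (cone0 (bc φ g (w (cbot t))) t τ) = 0 := by
    intro τ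
    have : ∀ (s : ℕ) (τ : Cube s), bc φ f (cone0 (bc φ g (w (cbot t))) s τ) = 0 := by
      intro s
      induction s with
      | zero => intro τ; exact bc_comp φ f g hfg _
      | succ s ih =>
        rintro ⟨_ | _, τ⟩
        · exact ih τ
        · exact map_zero _
    exact this t τ
  refine ⟨w', fun τ => ?_⟩
  rw [kz_lin, hw']
  simp only [c]
  rw [map_sub, map_sub, bc_map, bc_comp φ f g hfg, hbc0, hfv]
  simp

theorem lower_alg {J : Ideal (MvPolynomial (Fin n) K)} {r : ℕ} (hJ : RegLE J r) [IsDomain R]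
    {t E : ℕ} {y : ℕ → MvPolynomial (Fin n) K} (hy : ∀ i, (y i).IsHomogeneous 1)
    (hreg : RegS (t + 1) (fun i => φ (y i)))
    (hφ : ∀ (a : MvPolynomial (Fin n) K) d, 1 ≤ d → a.IsHomogeneous d →
      φ a ∈ kI (t + 1) (fun i => φ (y i)))
    (hy0 : ∀ i ≤ t, φ (y i) ≠ 0) {g : MvPolynomial (Fin n) K} (hg : g.IsHomogeneous E)
    (hgJ : ∀ i ≤ t, y i * g ∈ J) (hr : r ≤ E) : φ g ∈ Ideal.map φ J := by
  obtain ⟨F, hF⟩ := hJ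
  have hZ : ∀ i s j, i + j = t + 2 → r + s + 2 ≤ E + j →
      Zig φ (t + 1) E y (F.deg s) (F.d s) j := by
    intro i
    induction i with
    | zero => intro s j hj _; exact zig_base φ _ _ _ _ _ (by omega)
    | succ i ih =>
      intro s j hj hrj
      exact zig_step φ hy hreg hφ (F.d_gr s) (F.exact_succ s) (ih (s + 1) (j + 1) (by omega)
        (by omega)) (fun p => by have := hF (s + 1) p; omega)
  have hZ0 : Zig φ (t + 1) E y (fun _ => 0) F.aug 1 :=
    zig_step φ hy hreg hφ F.aug_gr F.exact_zero (hZ t 0 2 (by omega) (by omega))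
      (fun p => by have := hF 0 p; omega)
  let c : Cube (t + 1) → Unit → MvPolynomial (Fin n) K := ctop1 (fun _ => g) (t + 1)
  have hcr : ∀ (s : ℕ) (y : ℕ → MvPolynomial (Fin n) K) (_ : ∀ i < s, y i * g ∈ J) (τ : Cube s),
      kz s y (ctop1 (fun _ : Unit => g) s) τ ∈ LinearMap.range F.aug := by
    intro s
    induction s with
    | zero => intro y _ τ; exact zero_mem _
    | succ s ih =>
      intro y hyJ
      rintro ⟨_ | _, τ⟩
      · show kz s _ (fun _ => 0) τ + y 0 • ctop1 (fun _ : Unit => g) s τ ∈ _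
        rw [kz_zero, zero_add, ctop1_map (fun v : Unit → MvPolynomial (Fin n) K => y 0 • v)
          (smul_zero _)]
        have h0 : (fun _ => y 0 * g) ∈ LinearMap.range F.aug :=
          (F.aug_range _).1 (hyJ 0 (Nat.succ_pos _))
        have : ∀ (s : ℕ) (τ : Cube s), ctop1 (fun _ : Unit => y 0 * g) s τ ∈
            LinearMap.range F.aug := by
          intro s
          induction s with
          | zero => intro τ; exact h0
          | succ s ih =>
            rintro ⟨_ | _, τ⟩
            · exact zero_mem _
            · exact ih τ
        exact this s τ
      · exact neg_mem (ih _ (fun i hi => hyJ _ (Nat.succ_lt_succ hi)) τ)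
  obtain ⟨w, hw⟩ := hZ0 (kz (t + 1) y c) (kz_kz _ _ _)
    (hcr (t + 1) y fun i hi => hgJ i (Nat.le_of_lt_succ hi))
    (kz_supp _ _ 0 _ (fun τ h => absurd h (Nat.not_lt_zero _)))
    (kz_homVec _ E y hy c (fun τ => by
      by_cases h : nf (t + 1) τ = 0
      · rw [h]
        have : ∀ (s : ℕ) (τ : Cube s), HomVec (fun _ => 0) (E + 0)
            (ctop1 (fun _ : Unit => g) s τ) := by
          intro s
          induction s with
          | zero => intro τ p; exact ⟨hg, fun h => absurd h (Nat.not_lt_zero _)⟩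
          | succ s ih =>
            rintro ⟨_ | _, τ⟩
            · exact HomVec.zero _ _
            · exact ih τ
        exact this _ τ
      · simp only [c]
        rw [ctop1_of_pos _ _ _ h]
        exact HomVec.zero _ _))
  have hcyc : ∀ τ, kz (t + 1) (fun i => φ (y i))
      (fun σ => (fun p => φ (c σ p)) - bc φ F.aug (w σ)) τ = 0 := by
    intro τ
    rw [kz_sub, ← hw, ← kz_phi, sub_self]
  have htop := kz_top t (fun i => φ (y i)) hy0
    (fun σ => ((fun p => φ (c σ p)) - bc φ F.aug (w σ)) ()) (fun τ => by
    have := kz_lin (LinearMap.proj (R := R) (φ := fun _ : Unit => R) ()) (t + 1)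
      (fun i => φ (y i)) (fun σ => (fun p => φ (c σ p)) - bc φ F.aug (w σ)) τ
    rw [hcyc, map_zero] at this
    exact this)
  simp only [c, ctop1_top, Pi.sub_apply] at htop
  rw [sub_eq_zero.1 htop]
  simp only [bc, Fintype.linearCombination_apply, Finset.sum_apply, Pi.smul_apply]
  refine Ideal.sum_mem _ fun q _ => ?_
  refine Ideal.mul_mem_left _ _ (Ideal.mem_map_of_mem _ ?_)
  rw [F.aug_range]
  exact ⟨Pi.single q 1, rfl⟩

end zig
end SqP

namespace SqP
section lower
variable {K : Type*} [Field K] {n : ℕ} {G : SimpleGraph (Fin n)}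

lemma regS_X : ∀ (t s : ℕ) (y : ℕ → MvPolynomial ℕ K) (_ : ∀ i < t, y i = X (i + s)), RegS t y
  | 0, _, _, _ => trivial
  | t + 1, s, y, hy => by
    have h1 : ∀ i < t, y (i + 1) = X (i + (s + 1)) := fun i hi => by
      rw [hy (i + 1) (Nat.succ_lt_succ hi)]
      congr 1
      ring
    refine ⟨?_, regS_X t (s + 1) _ h1⟩
    have hI : kI t (fun i => y (i + 1)) =
        Ideal.span ((X : ℕ → MvPolynomial ℕ K) '' {x | ∃ i < t, x = i + (s + 1)}) := by
      rw [kI]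
      congr 1
      ext a
      constructor
      · rintro ⟨i, hi, rfl⟩
        exact ⟨_, ⟨i, hi, rfl⟩, (h1 i hi).symm⟩
      · rintro ⟨_, ⟨i, hi, rfl⟩, rfl⟩
        exact ⟨i, hi, h1 i hi⟩
    intro a ha
    rw [hI, mem_ideal_span_X_image] at ha ⊢
    intro m hm
    rw [hy 0 (Nat.succ_pos _), zero_add] at ha
    obtain ⟨x, ⟨i, hi, rfl⟩, hx⟩ := ha (Finsupp.single s 1 + m) (by
      rw [mem_support_iff, coeff_X_mul]
      exact mem_support_iff.1 hm)
    refine ⟨_, ⟨i, hi, rfl⟩, ?_⟩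
    rw [Finsupp.add_apply, Finsupp.single_apply, if_neg (by omega), zero_add] at hx
    exact hx

lemma phi_mem {R : Type*} [CommRing R] (φ : MvPolynomial (Fin n) K →+* R) (I : Ideal R)
    (h : ∀ v, φ (X v) ∈ I) (a : MvPolynomial (Fin n) K) (d : ℕ) (hd : 1 ≤ d)
    (ha : a.IsHomogeneous d) : φ a ∈ I := by
  have : (Ideal.Quotient.mk I).comp φ =
      ((Ideal.Quotient.mk I).comp φ).comp ((C : K →+* MvPolynomial (Fin n) K).comp
        (constantCoeff)) := by
    apply MvPolynomial.ringHom_ext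
    · intro r
      simp
    · intro v
      simp [Ideal.Quotient.eq_zero_iff_mem, h v]
  have h2 := congrArg (fun f => f a) this
  have h3 : constantCoeff a = 0 := by
    rw [constantCoeff_eq]
    apply ha.coeff_eq_zero
    simp
    omega
  simp only [RingHom.comp_apply, h3, map_zero] at h2
  exact Ideal.Quotient.eq_zero_iff_mem.1 h2

/-- vertices of a set of edges -/
def Vt {V : Type*} [Fintype V] (N : Finset (Sym2 V)) : Finset V :=
  Finset.univ.filter fun v => ∃ e ∈ N, v ∈ e

lemma mem_Vt {V : Type*} [Fintype V] {N : Finset (Sym2 V)} {v : V} :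
    v ∈ Vt N ↔ ∃ e ∈ N, v ∈ e := by simp [Vt]

lemma card_Vt {V : Type*} [Fintype V] {G : SimpleGraph V} {N : Finset (Sym2 V)}
    (h : IsMatchingSet G N) : (Vt N).card = 2 * N.card := by
  have : Vt N = N.biUnion fun e => Finset.univ.filter fun v => v ∈ e := by
    ext v; simp [Vt]
  rw [this, Finset.card_biUnion]
  · rw [Finset.sum_const_nat (m := 2), mul_comm]
    intro e he
    have h1 := h.1 e he
    induction e with
    | _ x y =>
      have h2 : G.Adj x y := h1
      have : (Finset.univ.filter fun v => v ∈ s(x, y)) = {x, y} := by ext v; simp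
      rw [this, Finset.card_pair h2.ne]
  · intro e he f hf hef
    rw [Function.onFun, Finset.disjoint_left]
    intro v hv hv'
    exact h.2 e he f hf hef v (Finset.mem_filter.1 hv).2 (Finset.mem_filter.1 hv').2

lemma even_fiber {V : Type*} [Fintype V] {G : SimpleGraph V} {N : Finset (Sym2 V)}
    (h : IsMatchingSet G N) (c : V → ℕ) (hc : ∀ u v, s(u, v) ∈ N → c u = c v) (j : ℕ) :
    Even ((Vt N).filter fun v => c v = j).card := by
  have : ((Vt N).filter fun v => c v = j) = Vt (N.filter fun e => ∃ v ∈ e, c v = j) := by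
    ext v
    simp only [Finset.mem_filter, mem_Vt]
    constructor
    · rintro ⟨⟨e, he, hv⟩, hj⟩
      exact ⟨e, ⟨he, v, hv, hj⟩, hv⟩
    · rintro ⟨e, ⟨he, u, hu, hj⟩, hv⟩
      refine ⟨⟨e, he, hv⟩, ?_⟩
      induction e with
      | _ x y =>
        have := hc x y he
        rcases Sym2.mem_iff.1 hu with rfl | rfl <;> rcases Sym2.mem_iff.1 hv with rfl | rfl <;> omega
  rw [this, card_Vt (isMatchingSet_subset h (Finset.filter_subset _ _))]
  exact even_two_mul _

lemma mt_sdiff {V : Type*} {G : SimpleGraph V} {B : Finset V} {k : ℕ} (D : Finset V)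
   
    (h : Mt G B (k + D.card)) : Mt G (B \ D) k := by
  induction D using Finset.induction_on generalizing k with
  | empty => simpa using h
  | insert a D ha ih =>
    rw [Finset.card_insert_of_notMem ha] at h
    have := ih (k := k + 1) (by convert h using 1; ring)
    have := this.erase a
    rwa [Finset.sdiff_insert]

lemma mI_mem {Q : Finset (Fin n) → Prop} {A : Finset (Fin n)} (h : Q A) :
    (∏ v ∈ A, X v : MvPolynomial (Fin n) K) ∈ mI K Q := Ideal.subset_span ⟨A, h, rfl⟩

lemma prod_X_col {V : Type*} (B : Finset V) (c : V → ℕ) :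
    (∏ v ∈ B, X (c v) : MvPolynomial ℕ K) =
      monomial (∑ v ∈ B, Finsupp.single (c v) 1) 1 := by
  rw [MvPolynomial.monomial_sum_one]
  rfl

lemma sum_single_col {V : Type*} (B : Finset V) (c : V → ℕ) (j : ℕ) :
    (∑ v ∈ B, Finsupp.single (c v) 1 : ℕ →₀ ℕ) j = (B.filter fun v => c v = j).card := by
  rw [Finset.card_filter, Finsupp.finsetSum_apply]
  refine Finset.sum_congr rfl fun v _ => ?_
  rw [Finsupp.single_apply]

lemma map_le_mon {k : ℕ} (φ : MvPolynomial (Fin n) K →+* MvPolynomial ℕ K) (c : Fin n → ℕ)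
    (A : Finset (Fin n))
    (hφB : ∀ B ⊆ A, φ (∏ v ∈ B, X v) = monomial (∑ v ∈ B, Finsupp.single (c v) 1) 1)
    (hφ0 : ∀ v ∉ A, φ (X v) = 0) :
    Ideal.map φ (edgeIdealSqPow K G k) ≤ Ideal.span ((fun s => monomial s (1 : K)) ''
      {s | ∃ N, IsMatchingSet G N ∧ N.card = k ∧ Vt N ⊆ A ∧
        s = ∑ v ∈ Vt N, Finsupp.single (c v) 1}) := by
  rw [edgeIdealSqPow, Ideal.map_span, Ideal.span_le]
  rintro f ⟨g, ⟨N, hN, hNk, hg⟩, hf⟩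
  have hg' : g = ∏ v ∈ Vt N, X v := by
    rw [hg]
    refine Finset.prod_congr ?_ fun _ _ => rfl
    ext v
    simp [Vt]
  rw [← hf, hg', SetLike.mem_coe]
  by_cases hs : Vt N ⊆ A
  · rw [hφB _ hs]
    exact Ideal.subset_span (Set.mem_image_of_mem _ ⟨N, hN, hNk, hs, rfl⟩)
  · obtain ⟨v, hv, hvM⟩ := Finset.not_subset.1 hs
    have : φ (∏ v ∈ Vt N, X v) = 0 := by
      rw [map_prod]
      exact Finset.prod_eq_zero hv (hφ0 v hvM)
    rw [this]
    exact zero_mem _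

theorem lower_comb {k t r : ℕ} (hk : 1 ≤ k) {M : Finset (Sym2 (Fin n))} (hM : IsMatchingSet G M)
    (hcard : M.card = t + k) (col : Sym2 (Fin n) → ℕ) (hcol : ∀ e ∈ M, col e ≤ t)
    (hsurj : ∀ i ≤ t, ∃ e ∈ M, col e = i)
    (hgap : ∀ e ∈ M, ∀ f ∈ M, col e ≠ col f → IsGap G e f)
    (hr : RegLE (edgeIdealSqPow K G k) r) : t + 2 * k ≤ r := by
  by_contra! hlt
  -- vertex colouring
  have : ∃ c : Fin n → ℕ, ∀ v, ∀ e ∈ M, v ∈ e → c v = col e := by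
    have : ∀ v, ∃ a, ∀ e ∈ M, v ∈ e → a = col e := by
      intro v
      by_cases h : ∃ e ∈ M, v ∈ e
      · obtain ⟨e, he, hv⟩ := h
        refine ⟨col e, fun f hf hvf => ?_⟩
        by_cases hef : e = f
        · rw [hef]
        · exact absurd hvf (hM.2 e he f hf hef v hv)
      · exact ⟨0, fun e he hv => absurd ⟨e, he, hv⟩ h⟩
    choose c hc using this
    exact ⟨c, hc⟩
  obtain ⟨c, hc⟩ := this
  have hct : ∀ v ∈ Vt M, c v ≤ t := fun v hv => by
    obtain ⟨e, he, hve⟩ := mem_Vt.1 hv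
    rw [hc v e he hve]
    exact hcol e he
  have hadj : ∀ u ∈ Vt M, ∀ v ∈ Vt M, G.Adj u v → c u = c v := by
    intro u hu v hv huv
    obtain ⟨e, he, hue⟩ := mem_Vt.1 hu
    obtain ⟨f, hf, hvf⟩ := mem_Vt.1 hv
    rw [hc u e he hue, hc v f hf hvf]
    by_contra hne
    exact (hgap e he f hf hne).2 u v hue hvf huv
  have : ∀ i, ∃ v, i ≤ t → v ∈ Vt M ∧ c v = i := by
    intro i
    by_cases hi : i ≤ t
    · obtain ⟨e, he, h⟩ := hsurj i hi
      induction e with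
      | _ x y =>
        exact ⟨x, fun _ => ⟨mem_Vt.2 ⟨_, he, by simp⟩, by rw [hc x _ he (by simp), h]⟩⟩
    · obtain ⟨e, he, h⟩ := hsurj 0 (Nat.zero_le _)
      induction e with
      | _ x y => exact ⟨x, fun h => absurd h hi⟩
  choose vt hvt using this
  let D : Finset (Fin n) := (Finset.range (t + 1)).image vt
  have hvD : ∀ i ≤ t, vt i ∈ D := fun i hi =>
    Finset.mem_image_of_mem _ (Finset.mem_range.2 (Nat.lt_succ_of_le hi))
  have hDM : D ⊆ Vt M := by
    intro v hv
    obtain ⟨i, hi, rfl⟩ := Finset.mem_image.1 hv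
    exact (hvt i (Nat.le_of_lt_succ (Finset.mem_range.1 hi))).1
  have hDc : D.card = t + 1 := by
    rw [Finset.card_image_of_injOn, Finset.card_range]
    intro i hi j hj hij
    have hi' := Nat.le_of_lt_succ (Finset.mem_range.1 hi)
    have hj' := Nat.le_of_lt_succ (Finset.mem_range.1 hj)
    rw [← (hvt i hi').2, ← (hvt j hj').2]
    exact congrArg c hij
  have hσ : (Vt M).card = 2 * (t + k) := by rw [card_Vt hM, hcard]
  have hMt : Mt G (Vt M) (t + k) := ⟨M, hM, fun e he v hv => mem_Vt.2 ⟨e, he, hv⟩, hcard⟩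
  let p : Fin n → MvPolynomial ℕ K := fun v => if v ∈ Vt M then X (c v) else 0
  let φ : MvPolynomial (Fin n) K →+* MvPolynomial ℕ K := (aeval p : _ →ₐ[K] _).toRingHom
  have hφX : ∀ v, φ (X v) = p v := fun v => aeval_X p v
  let y : ℕ → MvPolynomial (Fin n) K := fun i => if i ≤ t then X (vt i) else 0
  have hφy : ∀ i ≤ t, φ (y i) = X i := fun i hi => by
    simp only [y, if_pos hi, hφX, p, if_pos (hvt i hi).1, (hvt i hi).2]
  have hφB : ∀ B ⊆ Vt M, φ (∏ v ∈ B, X v) = monomial (∑ v ∈ B, Finsupp.single (c v) 1) 1 := by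
    intro B hB
    rw [map_prod, ← prod_X_col]
    refine Finset.prod_congr rfl fun v hv => ?_
    rw [hφX]
    exact if_pos (hB hv)
  have key : φ (∏ v ∈ Vt M \ D, X v) ∈ Ideal.map φ (edgeIdealSqPow K G k) := by
    refine lower_alg φ hr (t := t) (E := t + 2 * k - 1) (y := y) ?_ ?_ ?_ ?_ ?_ ?_ (by omega)
    · intro i
      simp only [y]
      split_ifs
      · exact isHomogeneous_X _ _
      · exact isHomogeneous_zero _ _ _
    · exact regS_X (t + 1) 0 _ fun i hi => hφy i (Nat.le_of_lt_succ hi)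
    · refine phi_mem φ _ fun v => ?_
      rw [hφX]
      simp only [p]
      split_ifs with hv
      · exact Ideal.subset_span ⟨c v, Nat.lt_succ_of_le (hct v hv), hφy _ (hct v hv)⟩
      · exact zero_mem _
    · intro i hi
      rw [hφy i hi]
      exact X_ne_zero i
    · have := IsHomogeneous.prod (Vt M \ D) (fun v => (X v : MvPolynomial (Fin n) K)) (fun _ => 1)
        (fun v _ => isHomogeneous_X _ _)
      convert this using 1
      rw [Finset.sum_const, Finset.card_sdiff_of_subset hDM, hσ, hDc]
      simp
      omega
    · intro i hi
      have e1 : y i * ∏ v ∈ Vt M \ D, X v = ∏ v ∈ Vt M \ D.erase (vt i), X v := by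
        simp only [y, if_pos hi]
        rw [← Finset.prod_insert (by simp [hvD i hi])]
        congr 1
        ext v
        by_cases hv : v = vt i <;> simp [hv, (hvt i hi).1]
      rw [e1, edgeIdealSqPow_eq]
      apply mI_mem
      rw [Finset.inter_univ]
      have h8 : Mt G (Vt M) (k + (D.erase (vt i)).card) := by
        rw [Finset.card_erase_of_mem (hvD i hi), hDc]
        convert hMt using 1
        omega
      convert mt_sdiff (D.erase (vt i)) h8
  have hle := map_le_mon (k := k) (G := G) φ c (Vt M) hφB (fun v hv => by
    rw [hφX]; exact if_neg hv)
  have h2 := hle key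
  rw [hφB _ Finset.sdiff_subset, mem_ideal_span_monomial_image] at h2
  obtain ⟨_, ⟨N, hN, hNk, hNM, rfl⟩, hs⟩ := h2 _ (by
    rw [mem_support_iff, coeff_monomial, if_pos rfl]; exact one_ne_zero)
  have hfib : ∀ j ∈ Finset.range (t + 1), ((Vt N).filter fun v => c v = j).card + 2 ≤
      ((Vt M).filter fun v => c v = j).card := by
    intro j hj
    have hj' := Nat.le_of_lt_succ (Finset.mem_range.1 hj)
    have h3 := hs j
    rw [sum_single_col, sum_single_col] at h3
    have h4 : ((Vt M \ D).filter fun v => c v = j).card <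
        ((Vt M).filter fun v => c v = j).card := by
      apply Finset.card_lt_card
      refine Finset.ssubset_iff_subset_ne.2
        ⟨Finset.filter_subset_filter _ Finset.sdiff_subset, fun h => ?_⟩
      have : vt j ∈ (Vt M).filter fun v => c v = j := Finset.mem_filter.2 (hvt j hj')
      rw [← h] at this
      exact (Finset.mem_sdiff.1 (Finset.mem_filter.1 this).1).2 (hvD j hj')
    have h5 := even_fiber hN c (fun u v huv => hadj u (hNM (mem_Vt.2 ⟨_, huv, by simp⟩)) v
      (hNM (mem_Vt.2 ⟨_, huv, by simp⟩)) (hN.1 _ huv)) j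
    have h6 := even_fiber hM c (fun u v huv => hadj u (mem_Vt.2 ⟨_, huv, by simp⟩) v
      (mem_Vt.2 ⟨_, huv, by simp⟩) (hM.1 _ huv)) j
    obtain ⟨a, ha⟩ := h5
    obtain ⟨b, hb⟩ := h6
    omega
  have h7 := Finset.sum_le_sum hfib
  rw [Finset.sum_add_distrib, ← Finset.card_eq_sum_card_fiberwise (s := Vt N)
    (fun v hv => Finset.mem_coe.2 (Finset.mem_range.2 (Nat.lt_succ_of_le (hct v (hNM hv))))),
    ← Finset.card_eq_sum_card_fiberwise (s := Vt M)
    (fun v hv => Finset.mem_coe.2 (Finset.mem_range.2 (Nat.lt_succ_of_le (hct v hv)))),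
    card_Vt hN, hσ, hNk] at h7
  simp at h7
  omega

theorem lower (hG : G.IsAcyclic) {k r : ℕ} (hk : 1 ≤ k) (hk2 : k ≤ matchingNumber G)
    (hr : RegLE (edgeIdealSqPow K G k) r) : aim G k + k ≤ r := by
  have hbd : BddAbove {k | ∃ M : Finset (Sym2 (Fin n)), IsMatchingSet G M ∧ M.card = k} :=
    ⟨(Finset.univ : Finset (Sym2 (Fin n))).card, by
      rintro _ ⟨M, _, rfl⟩
      exact Finset.card_le_card (Finset.subset_univ _)⟩
  have hne : Set.Nonempty {k | ∃ M : Finset (Sym2 (Fin n)), IsMatchingSet G M ∧ M.card = k} :=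
    ⟨0, ∅, ⟨by simp, by simp⟩, by simp⟩
  obtain ⟨M0, hM0, hM0c⟩ := Nat.sSup_mem hne hbd
  obtain ⟨M1, hM1, hM1c⟩ := Finset.exists_subset_card_eq (s := M0) (n := k)
    (by rw [hM0c]; exact hk2)
  have hmem : k ∈ {m | ∃ M : Finset (Sym2 (Fin n)), IsAdmissibleMatching G k M ∧ M.card = m} := by
    refine ⟨M1, adm_isAdmissible hG ⟨isMatchingSet_subset hM0 hM1, fun _ => 0, by simp, ?_⟩, hM1c⟩
    have : M1.Nonempty := by rw [← Finset.card_pos]; omega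
    rw [Finset.image_const this]
    simp
    omega
  have hka : k ≤ aim G k := le_csSup (bddAbove_adm G k) hmem
  obtain ⟨M, ⟨hM, P, hP1, hP2, hP3, hP4, hP5, _⟩, hMc⟩ := Nat.sSup_mem ⟨k, hmem⟩ (bddAbove_adm G k)
  have hP3' : ∀ e, e ∈ M ↔ ∃ q ∈ P, e ∈ q := by
    intro e
    rw [← hP3]
    simp only [Finset.mem_biUnion, id]
  change M.card = aim G k at hMc
  obtain ⟨t, ht⟩ : ∃ t, aim G k = t + k := ⟨aim G k - k, by omega⟩
  have hPt : t + 1 ≤ P.card := by omega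
  let ix : Finset (Sym2 (Fin n)) → ℕ := fun q => if h : q ∈ P then (P.equivFin ⟨q, h⟩ : ℕ) else 0
  have : ∀ e, ∃ q, e ∈ M → q ∈ P ∧ e ∈ q := by
    intro e
    by_cases he : e ∈ M
    · obtain ⟨q, hq, heq⟩ := (hP3' e).1 he
      exact ⟨q, fun _ => ⟨hq, heq⟩⟩
    · exact ⟨∅, fun h => absurd h he⟩
  choose pt hpt using this
  have hfin := lower_comb (K := K) (r := r) hk hM (hMc.trans ht) (fun e => min (ix (pt e)) t)
    (fun e _ => min_le_right _ _) ?_ ?_ hr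
  · omega
  · intro i hi
    let q := P.equivFin.symm ⟨i, by omega⟩
    obtain ⟨e, he⟩ := hP1 q q.2
    have heM : e ∈ M := (hP3' e).2 ⟨q, q.2, he⟩
    refine ⟨e, heM, ?_⟩
    have : pt e = q := by
      by_contra hne
      exact Finset.disjoint_left.1 (hP2 _ (hpt e heM).1 _ q.2 hne) (hpt e heM).2 he
    have h2 : ix q = i := by
      simp only [ix]
      rw [dif_pos q.2]
      simp [q]
    simp only [this, h2]
    omega
  · intro e he f hf hne
    refine hP4 _ (hpt e he).1 _ (hpt f hf).1 (fun h => hne ?_) e (hpt e he).2 f (hpt f hf).2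
    rw [h]

theorem final (hG : G.IsAcyclic) {k : ℕ} (hk : 1 ≤ k) (hk2 : k ≤ matchingNumber G) :
    reg (edgeIdealSqPow K G k) = aim G k + k := by
  have hup := gfr_of_regLE (upper (K := K) hG hk)
  apply le_antisymm
  · exact Nat.sInf_le hup
  · refine le_csInf ⟨_, hup⟩ ?_
    rintro r ⟨F, hF⟩
    exact lower hG hk hk2 (regLE_of_gfr F hF)

end lower
end SqP

/-- For a forest `G`, `reg(I(G)^{[k]}) = aim(G,k) + k` for all `1 ≤ k ≤ ν(G)`. -/
theorem stmt_17 (K : Type*) [Field K] {n : ℕ} (G : SimpleGraph (Fin n))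
    (hforest : G.IsAcyclic)
    (k : ℕ) (h1 : 1 ≤ k) (h2 : k ≤ matchingNumber G) :
    reg (edgeIdealSqPow K G k) = aim G k + k := by
  exact SqP.final hforest h1 h2

end
end

section
/- If G is a graph whose edge ideal I(G) = (x_1x_2, x_3x_4, ..., x_{n-1}x_n) is a complete intersection of n/2 quadrics in disjoint variables, then for all 1 ≤ k ≤ n/2, depth(S/I(G)^{[k]}) = n/2 + 2k - 1 - k·0, i.e., g_{I(G)}(k) = n/2 - k. -/
open scoped Classical
open MvPolynomial RingTheory

noncomputable section

/-- The graded maximal ideal `(x_1, …, x_n)` of the polynomial ring. -/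
def maxIdeal (K : Type*) [Field K] (n : ℕ) : Ideal (MvPolynomial (Fin n) K) :=
  Ideal.span (Set.range X)

/-- The depth of `S/I` : the maximum length of an `S/I`-regular sequence contained in
the graded maximal ideal. -/
def depthQuot {K : Type*} [Field K] {n : ℕ} (I : Ideal (MvPolynomial (Fin n) K)) : ℕ :=
  sSup {d | ∃ rs : List (MvPolynomial (Fin n) K), rs.length = d ∧
    (∀ r ∈ rs, r ∈ maxIdeal K n) ∧
    RingTheory.Sequence.IsRegular (MvPolynomial (Fin n) K ⧸ I) rs}

/-- The normalized depth function of the edge ideal of `G`: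
`g_{I(G)}(k) = depth(S/I(G)^{[k]}) - (2k-1)`. -/
def gEdge (K : Type*) [Field K] {n : ℕ} (G : SimpleGraph (Fin n)) (k : ℕ) : ℤ :=
  (depthQuot (edgeIdealSqPow K G k) : ℤ) - (2 * k - 1)


set_option linter.unusedSectionVars false

/-- weak regularity of a list on `R/I`, spelled out on ideals -/
def WReg {R : Type*} [CommRing R] : List R → Ideal R → Prop
  | [], _ => True
  | r :: rs, I => (∀ f, r * f ∈ I → f ∈ I) ∧ WReg rs (I ⊔ Ideal.span {r})

lemma wreg_top {R : Type*} [CommRing R] (rs : List R) : WReg rs (⊤ : Ideal R) := by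
  induction rs with
  | nil => trivial
  | cons r rs ih => exact ⟨fun _ _ => trivial, by simpa using ih⟩

lemma wreg_of_colon {R : Type*} [CommRing R] (a : R) (rs : List R) (I J : Ideal R)
    (hJ : ∀ f, f ∈ J ↔ a * f ∈ I)
    (h1 : WReg rs J) (h2 : WReg rs (I ⊔ Ideal.span {a})) : WReg rs I := by
  induction rs generalizing I J with
  | nil => trivial
  | cons r rs ih =>
    have key : ∀ f, r * f ∈ I ⊔ Ideal.span {a} → ∃ g, f - a * g ∈ I := by
      intro f hf
      have := h2.1 f hf
      rw [Submodule.mem_sup] at this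
      obtain ⟨y, hy, z, hz, rfl⟩ := this
      obtain ⟨g, rfl⟩ := Ideal.mem_span_singleton'.1 hz
      exact ⟨g, by convert hy using 1; ring⟩
    refine ⟨?_, ih (I ⊔ Ideal.span {r}) (J ⊔ Ideal.span {r}) ?_ h1.2 ?_⟩
    · intro f hf
      obtain ⟨g, hg⟩ := key f (Ideal.mem_sup_left hf)
      have : g ∈ J := by
        apply h1.1
        rw [hJ]
        have := I.sub_mem hf (I.mul_mem_left r hg)
        convert this using 1; ring
      have := I.add_mem hg ((hJ g).1 this)
      simpa using this
    · intro f
      constructor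
      · intro hf
        rw [Submodule.mem_sup] at hf
        obtain ⟨y, hy, z, hz, rfl⟩ := hf
        rw [mul_add]
        exact Ideal.add_mem _ (Ideal.mem_sup_left ((hJ y).1 hy))
          (Ideal.mem_sup_right (Ideal.mul_mem_left _ _ hz))
      · intro hf
        rw [Submodule.mem_sup] at hf
        obtain ⟨y, hy, z, hz, hyz⟩ := hf
        obtain ⟨h, rfl⟩ := Ideal.mem_span_singleton'.1 hz
        obtain ⟨g, hg⟩ := key h (by
          have e : r * h = a * f - y := by rw [← hyz]; ring
          rw [e]
          exact Ideal.sub_mem _ (Ideal.mem_sup_right (Ideal.mul_mem_right _ _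
            (Ideal.mem_span_singleton_self a))) (Ideal.mem_sup_left hy))
        have h3 : f - r * g ∈ J := by
          rw [hJ]
          have := I.add_mem hy (I.mul_mem_left r hg)
          convert this using 1
          linear_combination -hyz
        have := Ideal.add_mem (J ⊔ Ideal.span {r}) (Ideal.mem_sup_left h3)
          (Ideal.mem_sup_right (Ideal.mul_mem_right g _ (Ideal.mem_span_singleton_self r)))
        simpa using this
    · have := h2.2
      rwa [sup_right_comm]

open scoped Pointwise in
lemma isWeaklyRegular_of_wreg {R : Type*} [CommRing R] (rs : List R) (I : Ideal R)
    (h : WReg rs I) : RingTheory.Sequence.IsWeaklyRegular (R ⧸ I) rs := by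
  induction rs generalizing I with
  | nil => simp
  | cons r rs ih =>
    rw [RingTheory.Sequence.isWeaklyRegular_cons_iff]
    constructor
    · rw [isSMulRegular_iff_right_eq_zero_of_smul]
      intro x hx
      obtain ⟨f, rfl⟩ := Ideal.Quotient.mk_surjective x
      rw [Ideal.Quotient.eq_zero_iff_mem]
      apply h.1
      rw [← Ideal.Quotient.eq_zero_iff_mem, ← hx, map_mul]
      rfl
    · have e1 : (r • (⊤ : Submodule R (R ⧸ I))) = Submodule.map (Submodule.mkQ I) (I ⊔ Ideal.span {r}) := by
        rw [Submodule.map_sup, Submodule.map_span]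
        rw [← Submodule.ideal_span_singleton_smul]
        ext x
        rw [Submodule.ideal_span_singleton_smul, Submodule.mem_smul_pointwise_iff_exists]
        simp only [Submodule.mkQ_map_self, bot_sup_eq, Set.image_singleton,
          Submodule.mem_span_singleton]
        constructor
        · rintro ⟨b, -, rfl⟩
          obtain ⟨f, rfl⟩ := Submodule.mkQ_surjective I b
          exact ⟨f, by rw [← map_smul, ← map_smul, smul_eq_mul, smul_eq_mul, mul_comm]⟩
        · rintro ⟨f, rfl⟩
          exact ⟨Submodule.mkQ I f, trivial,
            by rw [← map_smul, ← map_smul, smul_eq_mul, smul_eq_mul, mul_comm]⟩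
      have e : (QuotSMulTop r (R ⧸ I)) ≃ₗ[R] (R ⧸ (I ⊔ Ideal.span {r})) :=
        (Submodule.quotEquivOfEq _ _ e1).trans
          (Submodule.quotientQuotientEquivQuotient I (I ⊔ Ideal.span {r}) le_sup_left)
      exact (e.isWeaklyRegular_congr rs).2 (ih _ h.2)

lemma length_le_supportDim {R : Type*} [CommRing R] (rs : List R) {M : Type*} [AddCommGroup M]
    [Module R M] [Module.Finite R M] (h : RingTheory.Sequence.IsRegular M rs) :
    (rs.length : WithBot ℕ∞) ≤ Module.supportDim R M := by
  induction rs generalizing M with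
  | nil =>
    have := h.nontrivial
    have h0 := (Module.supportDim_ne_bot_iff_nontrivial R M).2 this
    rw [List.length_nil, Nat.cast_zero]
    have h1 := Module.nonempty_support_of_nontrivial (R := R) (M := M)
    have := h1.to_subtype
    exact Order.krullDim_nonneg
  | cons r rs ih =>
    rw [RingTheory.Sequence.isRegular_cons_iff] at h
    have h1 := ih h.2
    have h2 := Module.supportDim_quotSMulTop_succ_le_of_notMem_minimalPrimes (M := M) (x := r)
      (fun _ ↦ h.1.notMem_of_mem_minimalPrimes)
    refine le_trans ?_ h2
    push_cast [List.length_cons]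
    gcongr

section Sq
variable {σ : Type*} [Fintype σ] [DecidableEq σ] {K : Type*} [Field K]

/-- squarefree monomial ideal -/
def sqI (K : Type*) [Field K] (P : Finset σ → Prop) : Ideal (MvPolynomial σ K) :=
  Ideal.span {f | ∃ A, P A ∧ f = ∏ v ∈ A, X v}

lemma prod_X_eq (A : Finset σ) : (∏ v ∈ A, X v : MvPolynomial σ K) =
    monomial (∑ v ∈ A, Finsupp.single v 1) 1 := by
  rw [monomial_sum_one]; rfl

lemma mem_sqI {P : Finset σ → Prop} (hP : ∀ A B, A ⊆ B → P A → P B) (f : MvPolynomial σ K) :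
    f ∈ sqI K P ↔ ∀ s ∈ f.support, P s.support := by
  have : sqI K P = Ideal.span ((fun s => monomial s (1 : K)) ''
      ((fun A : Finset σ => ∑ v ∈ A, Finsupp.single v 1) '' {A | P A})) := by
    unfold sqI
    congr 1
    ext f
    simp only [Set.mem_ofPred_eq, Set.mem_image, exists_exists_and_eq_and, prod_X_eq]
    exact ⟨fun ⟨A, h, e⟩ => ⟨A, h, e.symm⟩, fun ⟨A, h, e⟩ => ⟨A, h, e.symm⟩⟩
  have hc : ∀ (A : Finset σ) (i : σ), (∑ v ∈ A, Finsupp.single v 1 : σ →₀ ℕ) i =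
      if i ∈ A then 1 else 0 := by
    intro A i
    simp [Finsupp.finsetSum_apply, Finsupp.single_apply]
  rw [this, mem_ideal_span_monomial_image]
  refine forall₂_congr fun s hs => ?_
  simp only [Set.mem_image, Set.mem_ofPred_eq, exists_exists_and_eq_and]
  constructor
  · rintro ⟨A, hA, hle⟩
    refine hP A _ (fun i hi => ?_) hA
    have := hle i
    rw [hc, if_pos hi] at this
    rw [Finsupp.mem_support_iff]; omega
  · intro h
    refine ⟨_, h, fun i => ?_⟩
    rw [hc]
    split_ifs with hi
    · rw [Finsupp.mem_support_iff] at hi; omega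
    · omega

lemma mem_sqI_colon {P : Finset σ → Prop} (hP : ∀ A B, A ⊆ B → P A → P B) (a : σ)
    (f : MvPolynomial σ K) : f ∈ sqI K (fun s => P (insert a s)) ↔ X a * f ∈ sqI K P := by
  rw [mem_sqI hP, mem_sqI (fun A B h => hP _ _ (Finset.insert_subset_insert a h)), support_X_mul]
  simp only [Finset.mem_map, addLeftEmbedding_apply, forall_exists_index, and_imp,
    forall_apply_eq_imp_iff₂]
  refine forall₂_congr fun s hs => ?_
  have : (Finsupp.single a 1 + s).support = insert a s.support := by
    ext i
    by_cases h : i = a <;> simp [h, eq_comm]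
  rw [this]

lemma mem_sqI_colon' {P : Finset σ → Prop} (hP : ∀ A B, A ⊆ B → P A → P B) (A : Finset σ)
    (f : MvPolynomial σ K) (hf : (∏ v ∈ A, X v) * f ∈ sqI K P) :
    f ∈ sqI K (fun s => P (A ∪ s)) := by
  induction A using Finset.induction_on generalizing P with
  | empty => simpa using hf
  | insert a A ha ih =>
    rw [Finset.prod_insert ha, mul_assoc, ← mem_sqI_colon hP] at hf
    have := ih (fun A B h => hP _ _ (Finset.insert_subset_insert a h)) hf
    simpa [Finset.insert_union] using this

lemma sqI_sup (P : Finset σ → Prop) (A : Finset σ) :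
    sqI K P ⊔ Ideal.span {∏ v ∈ A, X v} = sqI K (fun s => P s ∨ A ⊆ s) := by
  apply le_antisymm
  · refine sup_le (Ideal.span_mono ?_) ?_
    · rintro f ⟨B, hB, rfl⟩
      exact ⟨B, Or.inl hB, rfl⟩
    · rw [Ideal.span_singleton_le_iff_mem]
      exact Ideal.subset_span ⟨A, Or.inr subset_rfl, rfl⟩
  · refine Ideal.span_le.2 ?_
    rintro f ⟨B, hB | hB, rfl⟩
    · exact Ideal.mem_sup_left (Ideal.subset_span ⟨B, hB, rfl⟩)
    · apply Ideal.mem_sup_right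
      exact Ideal.mem_span_singleton.2 (Finset.prod_dvd_prod_of_subset _ _ _ hB)

/-- `e_d, ..., e_1` -/
def es (σ : Type*) [Fintype σ] (K : Type*) [Field K] : ℕ → List (MvPolynomial σ K)
  | 0 => []
  | d + 1 => esymm σ K (d + 1) :: es σ K d

lemma es_length (d : ℕ) : (es σ K d).length = d := by
  induction d with
  | zero => rfl
  | succ d ih => simp [es, ih]

lemma wreg_vertex {P : Finset σ → Prop} (hP : ∀ A B, A ⊆ B → P A → P B) (a : σ)
    (rs : List (MvPolynomial σ K))
    (h1 : WReg rs (sqI K (fun s => P (insert a s))))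
    (h2 : WReg rs (sqI K (fun s => P s ∨ a ∈ s))) : WReg rs (sqI K P) := by
  refine wreg_of_colon (X a) rs _ _ (mem_sqI_colon hP a) h1 ?_
  have := sqI_sup (K := K) P {a}
  simp only [Finset.prod_singleton, Finset.singleton_subset_iff] at this
  rwa [this]

lemma wreg_of_all {P : Finset σ → Prop} (h : ∀ s, P s) (rs : List (MvPolynomial σ K)) :
    WReg rs (sqI K P) := by
  have : sqI K P = ⊤ := by
    rw [Ideal.eq_top_iff_one]
    exact Ideal.subset_span ⟨∅, h _, by simp⟩
  rw [this]; exact wreg_top rs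

lemma wreg_congr {P Q : Finset σ → Prop} (h : ∀ s, P s ↔ Q s) {rs : List (MvPolynomial σ K)}
    (hQ : WReg rs (sqI K Q)) : WReg rs (sqI K P) := by
  have : P = Q := funext fun s => propext (h s)
  rwa [this]

lemma wreg_face (d : ℕ) (F : Finset σ) (hF : F.card = d) :
    WReg (es σ K d) (sqI K (fun s => ¬ s ⊆ F)) := by
  induction d generalizing F with
  | zero => trivial
  | succ d ih =>
    have hmono : ∀ A B : Finset σ, A ⊆ B → ¬ A ⊆ F → ¬ B ⊆ F := fun A B h h1 h2 => h1 (h.trans h2)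
    have hdiff : esymm σ K (d + 1) - ∏ v ∈ F, X v ∈ sqI K (fun s => ¬ s ⊆ F) := by
      have hmem : F ∈ Finset.powersetCard (d + 1) (Finset.univ : Finset σ) := by
        simp [Finset.mem_powersetCard, hF]
      rw [esymm, ← Finset.add_sum_erase _ _ hmem, add_sub_cancel_left]
      refine Ideal.sum_mem _ fun A hA => Ideal.subset_span ⟨A, ?_, rfl⟩
      rw [Finset.mem_erase, Finset.mem_powersetCard] at hA
      intro hAF
      exact hA.1 (Finset.eq_of_subset_of_card_le hAF (by omega))
    constructor
    · intro f hf
      have h1 : (∏ v ∈ F, X v) * f ∈ sqI K (fun s => ¬ s ⊆ F) := by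
        have := Ideal.sub_mem _ hf (Ideal.mul_mem_right f _ hdiff)
        convert this using 1; ring
      have := mem_sqI_colon' hmono F f h1
      have e : (fun s => ¬ F ∪ s ⊆ F) = (fun s => ¬ s ⊆ F) := by
        ext s; simp [Finset.union_subset_iff]
      rwa [e] at this
    · have e : sqI K (fun s => ¬ s ⊆ F) ⊔ Ideal.span {esymm σ K (d + 1)} =
          sqI K (fun s => ¬ s ⊆ F) ⊔ Ideal.span {∏ v ∈ F, X v} := by
        apply le_antisymm
        · refine sup_le le_sup_left ?_
          rw [Ideal.span_singleton_le_iff_mem]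
          have := Ideal.add_mem _ (Ideal.mem_sup_left (T := Ideal.span {∏ v ∈ F, X v}) hdiff)
            (Ideal.mem_sup_right (Ideal.mem_span_singleton_self _))
          simpa using this
        · refine sup_le le_sup_left ?_
          rw [Ideal.span_singleton_le_iff_mem]
          have := Ideal.sub_mem _
            (Ideal.mem_sup_right (Ideal.mem_span_singleton_self (esymm σ K (d + 1))))
            (Ideal.mem_sup_left (T := Ideal.span {esymm σ K (d + 1)}) hdiff)
          simpa using this
      rw [e, sqI_sup]
      have key : ∀ A : Finset σ, A ⊆ F → WReg (es σ K d) (sqI K (fun s => ¬ s ⊆ F ∨ A ⊆ s)) := by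
        intro A
        induction A using Finset.induction_on with
        | empty => intro _; exact wreg_of_all (by simp) _
        | insert a A ha ihA =>
          intro hAF
          rw [Finset.insert_subset_iff] at hAF
          refine wreg_vertex (P := fun s => ¬ s ⊆ F ∨ insert a A ⊆ s) ?_ a _ ?_ ?_
          · rintro B C hBC (h | h)
            · exact Or.inl (hmono _ _ hBC h)
            · exact Or.inr (h.trans hBC)
          · refine wreg_congr (fun s => ?_) (ihA hAF.2)
            rw [Finset.insert_subset_iff, Finset.insert_subset_iff,
              Finset.subset_insert_iff_of_notMem ha]
            simp [hAF.1]
          · refine wreg_congr (fun s => ?_) (ih (F.erase a)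
              (by rw [Finset.card_erase_of_mem hAF.1]; omega))
            rw [Finset.subset_erase, Finset.insert_subset_iff]
            tauto
      exact key F subset_rfl

end Sq

/-- number of full pairs among first `j` -/
def cnt {n : ℕ} (j : ℕ) (s : Finset (Fin n)) : ℕ :=
  ((Finset.range j).filter (fun i => ∀ v : Fin n, (v : ℕ) / 2 = i → v ∈ s)).card

lemma cnt_mono {n : ℕ} (j : ℕ) {s t : Finset (Fin n)} (h : s ⊆ t) : cnt j s ≤ cnt j t := by
  apply Finset.card_le_card
  intro i
  simp only [Finset.mem_filter]
  exact fun ⟨h1, h2⟩ => ⟨h1, fun v hv => h (h2 v hv)⟩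

lemma cnt_le {n : ℕ} (j : ℕ) (s : Finset (Fin n)) : cnt j s ≤ j := by
  simpa [cnt] using Finset.card_filter_le (Finset.range j)
    (fun i => ∀ v : Fin n, (v : ℕ) / 2 = i → v ∈ s)

lemma cnt_insert {n : ℕ} (j : ℕ) (a : Fin n) (ha : j ≤ (a : ℕ) / 2) (s : Finset (Fin n)) :
    cnt j (insert a s) = cnt j s := by
  unfold cnt
  congr 1
  apply Finset.filter_congr
  intro i hi
  rw [Finset.mem_range] at hi
  refine forall₂_congr fun v hv => ?_
  rw [Finset.mem_insert]
  have : v ≠ a := by rintro rfl; omega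
  simp [this]

lemma cnt_succ {n : ℕ} (j : ℕ) (a b : Fin n) (ha : (a : ℕ) = 2 * j) (hb : (b : ℕ) = 2 * j + 1)
    (s : Finset (Fin n)) :
    cnt (j + 1) s = cnt j s + if a ∈ s ∧ b ∈ s then 1 else 0 := by
  unfold cnt
  rw [Finset.range_add_one, Finset.filter_insert]
  have : (∀ v : Fin n, (v : ℕ) / 2 = j → v ∈ s) ↔ a ∈ s ∧ b ∈ s := by
    constructor
    · intro h; exact ⟨h a (by omega), h b (by omega)⟩
    · rintro ⟨h1, h2⟩ v hv
      have : v = a ∨ v = b := by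
        rw [Fin.ext_iff, Fin.ext_iff]; omega
      rcases this with rfl | rfl <;> assumption
  simp only [this]
  split_ifs
  · rw [Finset.card_insert_of_notMem (by simp)]
  · rfl

lemma wreg_main {n : ℕ} (K : Type*) [Field K] (j k d : ℕ) (F : Finset (Fin n)) (hj : 2 * j ≤ n)
    (hF : ∀ v : Fin n, (v : ℕ) < 2 * j → v ∈ F) (hk : k ≤ j + 1) (hd : d + j + 1 = F.card + k) :
    WReg (es (Fin n) K d) (sqI K (fun s => ¬ s ⊆ F ∨ k ≤ cnt j s)) := by
  induction j generalizing k d F with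
  | zero =>
    rcases Nat.eq_zero_or_pos k with rfl | hk0
    · exact wreg_of_all (by simp) _
    · refine wreg_congr (fun s => ?_) (wreg_face d F (by omega))
      have := cnt_le 0 s
      have : ¬ k ≤ cnt 0 s := by omega
      simp [this]
  | succ j ih =>
    rcases Nat.eq_zero_or_pos k with rfl | hk0
    · exact wreg_of_all (by simp) _
    by_cases hk2 : k = j + 2
    · refine wreg_congr (fun s => ?_) (wreg_face d F (by omega))
      have := cnt_le (j + 1) s
      have : ¬ k ≤ cnt (j + 1) s := by omega
      simp [this]
    obtain ⟨k, rfl⟩ : ∃ k', k = k' + 1 := ⟨k - 1, by omega⟩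
    let a : Fin n := ⟨2 * j, by omega⟩
    let b : Fin n := ⟨2 * j + 1, by omega⟩
    have hab : a ≠ b := by simp [a, b]
    have haF : a ∈ F := hF _ (by simp [a])
    have hbF : b ∈ F := hF _ (by simp only [b]; omega)
    have hc := cnt_succ j a b rfl rfl
    have hia : ∀ s, cnt j (insert a s) = cnt j s := cnt_insert j a (by simp [a])
    have hib : ∀ s, cnt j (insert b s) = cnt j s := cnt_insert j b (by simp [b]; omega)
    have hmono : ∀ A B : Finset (Fin n), A ⊆ B → (¬ A ⊆ F ∨ k + 1 ≤ cnt (j + 1) A) →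
        (¬ B ⊆ F ∨ k + 1 ≤ cnt (j + 1) B) := by
      rintro A B h (h1 | h1)
      · exact Or.inl fun h2 => h1 (h.trans h2)
      · exact Or.inr (h1.trans (cnt_mono _ h))
    have hcard := fun x (hx : x ∈ F) => Finset.card_erase_of_mem hx
    have hpos : 0 < F.card := Finset.card_pos.2 ⟨a, haF⟩
    refine wreg_vertex hmono a _ ?_ ?_
    · refine wreg_vertex (P := fun s => ¬ insert a s ⊆ F ∨ k + 1 ≤ cnt (j + 1) (insert a s))
        (fun A B h => hmono _ _ (Finset.insert_subset_insert a h)) b _ ?_ ?_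
      · refine wreg_congr (fun s => ?_) (ih k d F (by omega) (fun v hv => hF v (by omega))
          (by omega) (by omega))
        rw [hc, hia, hib]
        simp [Finset.insert_subset_iff, haF, hbF]
      · refine wreg_congr (fun s => ?_) (ih (k + 1) d (F.erase b) (by omega) (fun v hv => ?_)
          (by omega) (by rw [hcard b hbF]; omega))
        · rw [hc, hia, Finset.subset_erase, Finset.insert_subset_iff]
          by_cases hbs : b ∈ s
          · simp [hbs]
          · simp [hbs, haF, hab.symm]
        · refine Finset.mem_erase.2 ⟨?_, hF v (by omega)⟩
          rintro rfl; simp [b] at hv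
    · refine wreg_congr (fun s => ?_) (ih (k + 1) d (F.erase a) (by omega) (fun v hv => ?_)
          (by omega) (by rw [hcard a haF]; omega))
      · rw [hc, Finset.subset_erase]
        by_cases has : a ∈ s <;> simp [has]
      · refine Finset.mem_erase.2 ⟨?_, hF v (by omega)⟩
        rintro rfl; simp [a] at hv

lemma card_le_cnt {n : ℕ} (hn : Even n) (A : Finset (Fin n)) :
    A.card ≤ n / 2 + cnt (n / 2) A := by
  have hmaps : ∀ v ∈ A, (v : ℕ) / 2 ∈ Finset.range (n / 2) := by
    intro v _
    have := v.2
    obtain ⟨m, rfl⟩ := hn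
    rw [Finset.mem_range]; omega
  rw [Finset.card_eq_sum_card_fiberwise hmaps]
  have e : n / 2 + cnt (n / 2) A = ∑ i ∈ Finset.range (n / 2),
      (1 + if ∀ v : Fin n, (v : ℕ) / 2 = i → v ∈ A then 1 else 0) := by
    rw [Finset.sum_add_distrib, cnt, Finset.card_filter]; simp
  rw [e]
  refine Finset.sum_le_sum fun i hi => ?_
  rw [Finset.mem_range] at hi
  let a : Fin n := ⟨2 * i, by omega⟩
  let b : Fin n := ⟨2 * i + 1, by omega⟩
  have hvab : ∀ v : Fin n, (v : ℕ) / 2 = i → v = a ∨ v = b := by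
    intro v hv
    rw [Fin.ext_iff, Fin.ext_iff]; simp only [a, b]; omega
  split_ifs with h
  · refine (Finset.card_le_card (t := {a, b}) ?_).trans Finset.card_le_two
    intro v hv
    rw [Finset.mem_filter] at hv
    simpa using hvab v hv.2
  · push Not at h
    obtain ⟨w, hw, hwA⟩ := h
    rw [add_zero, Finset.card_le_one]
    intro x hx y hy
    rw [Finset.mem_filter] at hx hy
    have hx1 : x ≠ w := by rintro rfl; exact hwA hx.1
    have hy1 : y ≠ w := by rintro rfl; exact hwA hy.1
    rw [ne_eq, Fin.ext_iff] at hx1 hy1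
    rw [Fin.ext_iff]
    omega

lemma edge_mem {n : ℕ} (G : SimpleGraph (Fin n))
    (hAdj : ∀ i j : Fin n, G.Adj i j ↔ (i ≠ j ∧ (i : ℕ) / 2 = (j : ℕ) / 2))
    (e : Sym2 (Fin n)) (he : e ∈ G.edgeSet) (u v : Fin n) (hv : v ∈ e)
    (huv : (u : ℕ) / 2 = (v : ℕ) / 2) : u ∈ e := by
  induction e using Sym2.ind with
  | _ a b =>
    rw [SimpleGraph.mem_edgeSet, hAdj] at he
    rw [Sym2.mem_iff] at hv ⊢
    simp only [Fin.ext_iff, ne_eq] at *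
    omega

lemma edgeIdeal_eq (K : Type*) [Field K] {n : ℕ} (hn : Even n) (G : SimpleGraph (Fin n))
    (hAdj : ∀ i j : Fin n, G.Adj i j ↔ (i ≠ j ∧ (i : ℕ) / 2 = (j : ℕ) / 2)) (k : ℕ) :
    edgeIdealSqPow K G k = sqI K (fun s => k ≤ cnt (n / 2) s) := by
  apply le_antisymm
  · refine Ideal.span_mono ?_
    rintro f ⟨M, hM, rfl, rfl⟩
    refine ⟨_, ?_, rfl⟩
    refine Finset.card_le_card_of_injOn (fun e => (e.out.1 : ℕ) / 2) ?_ ?_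
    · intro e he
      simp only [Finset.coe_filter, Finset.mem_range, Finset.mem_filter, Finset.mem_univ, true_and]
      refine ⟨?_, fun v hv => ⟨e, he, edge_mem G hAdj e (hM.1 e he) v e.out.1 e.out_fst_mem hv⟩⟩
      have := e.out.1.2
      obtain ⟨m, rfl⟩ := hn
      omega
    · intro e he f hf hef
      by_contra hne
      refine hM.2 e he f hf hne f.out.1 ?_ f.out_fst_mem
      exact edge_mem G hAdj e (hM.1 e he) _ e.out.1 e.out_fst_mem hef.symm
  · refine Ideal.span_le.2 ?_
    rintro f ⟨A, hA, rfl⟩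
    obtain ⟨T, hT, hTk⟩ := Finset.exists_subset_card_eq hA
    have hT1 : ∀ i ∈ T, i < n / 2 ∧ ∀ v : Fin n, (v : ℕ) / 2 = i → v ∈ A := by
      intro i hi
      simpa using hT hi
    let φ : {i // i ∈ T} → Sym2 (Fin n) := fun i =>
      s(⟨2 * i.1, by have := (hT1 i.1 i.2).1; omega⟩, ⟨2 * i.1 + 1, by have := (hT1 i.1 i.2).1; omega⟩)
    have hφ : ∀ i v, v ∈ φ i ↔ (v : ℕ) / 2 = i.1 := by
      intro i v
      simp only [φ, Sym2.mem_iff, Fin.ext_iff]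
      omega
    have hinj : Function.Injective φ := by
      intro i j hij
      have h1 := hφ i ⟨2 * i.1, by have := (hT1 i.1 i.2).1; omega⟩
      rw [hij, hφ] at h1
      apply Subtype.ext
      simp only at h1
      omega
    let M : Finset (Sym2 (Fin n)) := T.attach.image φ
    have hM : ∀ e, e ∈ M ↔ ∃ i, φ i = e := by simp [M]
    have hgen : (∏ v ∈ Finset.univ.filter (fun v => ∃ e ∈ M, v ∈ e), X v : MvPolynomial (Fin n) K) ∈
        edgeIdealSqPow K G k := by
      refine Ideal.subset_span ⟨M, ⟨?_, ?_⟩, ?_, rfl⟩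
      · intro e he
        obtain ⟨i, rfl⟩ := (hM e).1 he
        simp only [φ, SimpleGraph.mem_edgeSet, hAdj, ne_eq, Fin.ext_iff]
        omega
      · intro e he f hf hne v hve hvf
        obtain ⟨i, rfl⟩ := (hM e).1 he
        obtain ⟨j, rfl⟩ := (hM f).1 hf
        rw [hφ] at hve hvf
        exact hne (by rw [Subtype.ext (hve.symm.trans hvf)])
      · rw [Finset.card_image_of_injective _ hinj, Finset.card_attach, hTk]
    refine Ideal.mem_of_dvd _ (Finset.prod_dvd_prod_of_subset _ _ _ ?_) hgen
    intro v hv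
    rw [Finset.mem_filter] at hv
    obtain ⟨-, e, he, hve⟩ := hv
    obtain ⟨i, rfl⟩ := (hM e).1 he
    rw [hφ] at hve
    exact (hT1 i.1 i.2).2 v hve

lemma dim_prime_le {n : ℕ} (K : Type*) [Field K] (p : Ideal (MvPolynomial (Fin n) K))
    (A : Finset (Fin n)) (hA : ∀ v ∉ A, X v ∈ p) :
    ringKrullDim (MvPolynomial (Fin n) K ⧸ p) ≤ (A.card : WithBot ℕ∞) := by
  let g : MvPolynomial {v // v ∈ A} K →ₐ[K] (MvPolynomial (Fin n) K ⧸ p) :=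
    (Ideal.Quotient.mkₐ K p).comp (rename Subtype.val)
  have hg : Function.Surjective g := by
    rw [← AlgHom.range_eq_top]
    have h1 : (Ideal.Quotient.mkₐ K p).range = ⊤ := by
      rw [AlgHom.range_eq_top]; exact Ideal.Quotient.mkₐ_surjective K p
    rw [eq_top_iff, ← h1, ← Algebra.map_top, ← MvPolynomial.adjoin_range_X, AlgHom.map_adjoin]
    refine Algebra.adjoin_le ?_
    rintro _ ⟨_, ⟨v, rfl⟩, rfl⟩
    by_cases hv : v ∈ A
    · exact ⟨X ⟨v, hv⟩, by simp [g]⟩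
    · have : (Ideal.Quotient.mkₐ K p) (X v) = 0 := Ideal.Quotient.eq_zero_iff_mem.2 (hA v hv)
      rw [this]
      exact Subalgebra.zero_mem _
  have := ringKrullDim_le_of_surjective g.toRingHom hg
  refine this.trans ?_
  rw [MvPolynomial.ringKrullDim_of_isNoetherianRing, ringKrullDim_eq_zero_of_field]
  simp

lemma dim_le {n : ℕ} (K : Type*) [Field K] (I : Ideal (MvPolynomial (Fin n) K)) (d : ℕ)
    (h : ∀ p : Ideal (MvPolynomial (Fin n) K), p.IsPrime → I ≤ p →
      ringKrullDim (MvPolynomial (Fin n) K ⧸ p) ≤ (d : WithBot ℕ∞)) :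
    ringKrullDim (MvPolynomial (Fin n) K ⧸ I) ≤ (d : WithBot ℕ∞) := by
  rw [ringKrullDim_quotient]
  refine iSup_le fun q => ?_
  have h1 := h q.head.1.asIdeal q.head.1.2 q.head.2
  rw [ringKrullDim_quotient] at h1
  let q' : LTSeries (PrimeSpectrum.zeroLocus (R := MvPolynomial (Fin n) K) q.head.1.asIdeal) :=
    { length := q.length
      toFun := fun i => ⟨(q i).1, q.head_le i⟩
      step := fun i => q.step i }
  exact (le_iSup (fun q : LTSeries (PrimeSpectrum.zeroLocus (R := MvPolynomial (Fin n) K)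
    q.head.1.asIdeal) => (q.length : WithBot ℕ∞)) q').trans h1

lemma one_notMem_maxIdeal (K : Type*) [Field K] (n : ℕ) :
    (1 : MvPolynomial (Fin n) K) ∉ maxIdeal K n := by
  intro h
  have : maxIdeal K n ≤ RingHom.ker (constantCoeff (σ := Fin n) (R := K)) := by
    refine Ideal.span_le.2 ?_
    rintro _ ⟨v, rfl⟩
    simp [RingHom.mem_ker]
  have := this h
  simp [RingHom.mem_ker] at this

lemma prod_mem_maxIdeal (K : Type*) [Field K] (n : ℕ) (A : Finset (Fin n)) (hA : A ≠ ∅) :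
    (∏ v ∈ A, X v : MvPolynomial (Fin n) K) ∈ maxIdeal K n := by
  obtain ⟨v, hv⟩ := Finset.nonempty_iff_ne_empty.2 hA
  exact Ideal.mem_of_dvd _ (Finset.dvd_prod_of_mem _ hv) (Ideal.subset_span ⟨v, rfl⟩)

lemma es_mem_maxIdeal (K : Type*) [Field K] (n d : ℕ) :
    ∀ r ∈ es (Fin n) K d, r ∈ maxIdeal K n := by
  induction d with
  | zero => simp [es]
  | succ d ih =>
    intro r hr
    rcases List.mem_cons.1 hr with rfl | hr
    · refine Ideal.sum_mem _ fun A hA => prod_mem_maxIdeal K n A ?_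
      rintro rfl
      simp [Finset.mem_powersetCard] at hA
    · exact ih r hr

lemma depth_eq (K : Type*) [Field K] {n : ℕ} (hn : Even n)
    (G : SimpleGraph (Fin n))
    (hAdj : ∀ i j : Fin n, G.Adj i j ↔ (i ≠ j ∧ (i : ℕ) / 2 = (j : ℕ) / 2))
    (k : ℕ) (h1 : 1 ≤ k) (h2 : k ≤ n / 2) :
    depthQuot (edgeIdealSqPow K G k) = n / 2 + k - 1 := by
  have hI := edgeIdeal_eq K hn G hAdj k
  have hn2 : n / 2 + n / 2 = n := by obtain ⟨m, rfl⟩ := hn; omega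
  have hImax : edgeIdealSqPow K G k ≤ maxIdeal K n := by
    rw [hI]
    refine Ideal.span_le.2 ?_
    rintro f ⟨A, hA, rfl⟩
    refine prod_mem_maxIdeal K n A ?_
    rintro rfl
    have : cnt (n / 2) (∅ : Finset (Fin n)) = 0 := by
      rw [cnt, Finset.card_eq_zero, Finset.filter_eq_empty_iff]
      intro i hi h
      rw [Finset.mem_range] at hi
      exact absurd (h ⟨2 * i, by omega⟩ (by simp)) (by simp)
    omega
  have hdim : ringKrullDim (MvPolynomial (Fin n) K ⧸ edgeIdealSqPow K G k) ≤
      ((n / 2 + k - 1 : ℕ) : WithBot ℕ∞) := by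
    refine dim_le K _ _ fun p hp hle => ?_
    let A : Finset (Fin n) := Finset.univ.filter fun v => X v ∉ p
    refine (dim_prime_le K p A (fun v hv => by simpa [A] using hv)).trans ?_
    have hc : cnt (n / 2) A < k := by
      by_contra hcon
      push Not at hcon
      have : (∏ v ∈ A, X v : MvPolynomial (Fin n) K) ∈ p := by
        apply hle
        rw [hI]
        exact Ideal.subset_span ⟨A, hcon, rfl⟩
      obtain ⟨v, hv, hvp⟩ := (Ideal.IsPrime.prod_mem_iff (hp := hp)).1 this
      simp only [A, Finset.mem_filter] at hv
      exact hv.2 hvp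
    have := card_le_cnt hn A
    exact_mod_cast (by omega : A.card ≤ n / 2 + k - 1)
  apply IsGreatest.csSup_eq
  constructor
  · refine ⟨es (Fin n) K (n / 2 + k - 1), es_length _, es_mem_maxIdeal K n _, ?_, ?_⟩
    · apply isWeaklyRegular_of_wreg
      rw [hI]
      refine wreg_congr (fun s => ?_) (wreg_main K (n / 2) k (n / 2 + k - 1) Finset.univ
        (by omega) (by simp) (by omega) (by simp; omega))
      simp
    · intro htop
      have h3 : (Ideal.ofList (es (Fin n) K (n / 2 + k - 1)) •
          (⊤ : Submodule (MvPolynomial (Fin n) K) (MvPolynomial (Fin n) K ⧸ edgeIdealSqPow K G k)))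
          ≤ Submodule.map (Submodule.mkQ (edgeIdealSqPow K G k)) (maxIdeal K n) := by
        refine Submodule.smul_le.2 fun r hr x _ => ?_
        obtain ⟨f, rfl⟩ := Submodule.mkQ_surjective _ x
        rw [← map_smul]
        refine Submodule.mem_map_of_mem ?_
        exact Ideal.mul_mem_right _ _ (Ideal.span_le.2 (es_mem_maxIdeal K n _) hr)
      rw [← htop] at h3
      obtain ⟨g, hg, hg1⟩ := h3 (Submodule.mem_top (x := Submodule.mkQ _ 1))
      have : g - 1 ∈ edgeIdealSqPow K G k := (Submodule.Quotient.eq _).1 hg1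
      have := Ideal.sub_mem _ hg (hImax this)
      rw [sub_sub_cancel] at this
      exact one_notMem_maxIdeal K n this
  · rintro d ⟨rs, rfl, -, hreg⟩
    have h3 := length_le_supportDim rs hreg
    rw [Module.supportDim_quotient_eq_ringKrullDim] at h3
    exact_mod_cast h3.trans hdim

/-- If `G` is the perfect matching graph whose edge ideal is the complete intersection
`(x_1x_2, x_3x_4, …, x_{n-1}x_n)` (vertices `2m` and `2m+1` of `Fin n` are joined,
`n` even), then `g_{I(G)}(k) = n/2 - k` for all `1 ≤ k ≤ n/2`. -/
theorem stmt_18 (K : Type*) [Field K] {n : ℕ} (hn : Even n)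
    (G : SimpleGraph (Fin n))
    (hAdj : ∀ i j : Fin n, G.Adj i j ↔ (i ≠ j ∧ (i : ℕ) / 2 = (j : ℕ) / 2))
    (k : ℕ) (h1 : 1 ≤ k) (h2 : k ≤ n / 2) :
    gEdge K G k = (n / 2 : ℤ) - k := by
  rw [gEdge, depth_eq K hn G hAdj k h1 h2]
  omega

end
end
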